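/- For every real x with −1/4 < x < 1/4: (1/48)·∑_{n=0}^∞ (3/4)^{3(n+x)} · (1/2)_{n+x}³ (1/3)_{n+x} (2/3)_{n+x} / (1)_{n+x}⁵ · (74(n+x)² + 27(n+x) + 3) = (1/π²)·(8 cos⁴πx − 8 cos²πx + 3)/(4 cos⁴πx − cos²πx) + (3/4)^{3x} · (1/2)_x³ (1/3)_x (2/3)_x / (1)_x⁵ · (128x⁵/(3(2x−1)³)) · ∑_{n=0}^∞ [ (1/2+x)_n / (3/2−x)_n ]³, where both series converge. -/

import Mathlib

/-- The Pochhammer symbol for real index: `(a)_t = Γ(a+t)/Γ(a)`. -/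
noncomputable def pochG (a t : ℝ) : ℝ := Real.Gamma (a + t) / Real.Gamma a

/-- The Pochhammer symbol (rising factorial) `(a)_n = a (a+1) ⋯ (a+n-1)` for real `a`. -/
def pochR (a : ℝ) (n : ℕ) : ℝ := ∏ j ∈ Finset.range n, (a + j)

open Filter Topology

/-- A log-convex solution of the functional equation of `Γ`, built from the three values of `Γ` at
`s / 3`, `s / 3 + 1 / 3` and `s / 3 + 2 / 3`. -/
noncomputable def triplingGamma (s : ℝ) : ℝ :=
  Real.Gamma (s / 3) * Real.Gamma (s / 3 + 1 / 3) * Real.Gamma (s / 3 + 2 / 3) *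
    Real.exp ((s - 1) * Real.log 3) / (Real.Gamma (1 / 3) * Real.Gamma (2 / 3))

theorem convexOn_log_Gamma_affine (c : ℝ) (hc : 0 ≤ c) :
    ConvexOn ℝ (Set.Ioi 0) fun s : ℝ => Real.log (Real.Gamma (s / 3 + c)) := by
  refine ⟨convex_Ioi _, fun u hu v hv a b ha hb hab => ?_⟩
  have hu' : (0 : ℝ) < u := hu
  have hv' : (0 : ℝ) < v := hv
  have h := Real.convexOn_log_Gamma.2 (x := u / 3 + c) (y := v / 3 + c)
    (show (0 : ℝ) < _ by positivity) (show (0 : ℝ) < _ by positivity) ha hb hab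
  have e : (a • u + b • v) / 3 + c = a • (u / 3 + c) + b • (v / 3 + c) := by
    simp only [smul_eq_mul]
    linear_combination (-c) * hab
  simpa only [e, Function.comp_apply] using h

theorem triplingGamma_eq_Gamma {s : ℝ} (hs : 0 < s) : triplingGamma s = Real.Gamma s := by
  have h13 : 0 < Real.Gamma (1 / 3) := Real.Gamma_pos_of_pos (by norm_num)
  have h23 : 0 < Real.Gamma (2 / 3) := Real.Gamma_pos_of_pos (by norm_num)
  refine Real.eq_Gamma_of_log_convex (f := triplingGamma) ?_ (fun {y} hy => ?_)
    (fun {y} hy => ?_) ?_ hs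
  · have hlin : ConvexOn ℝ (Set.Ioi (0 : ℝ)) fun s : ℝ => (s - 1) * Real.log 3 := by
      refine ⟨convex_Ioi _, fun u _ v _ a b _ _ hab => ?_⟩
      simp only [smul_eq_mul]
      apply le_of_eq
      linear_combination Real.log 3 * hab
    refine (((((convexOn_log_Gamma_affine 0 le_rfl).add
      (convexOn_log_Gamma_affine (1 / 3) (by norm_num))).add
      (convexOn_log_Gamma_affine (2 / 3) (by norm_num))).add hlin).add_const
      (-Real.log (Real.Gamma (1 / 3) * Real.Gamma (2 / 3)))).congr fun s hs => ?_
    have hs' : (0 : ℝ) < s := hs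
    have e1 : Real.Gamma (s / 3) ≠ 0 := (Real.Gamma_pos_of_pos (by positivity)).ne'
    have e2 : Real.Gamma (s / 3 + 1 / 3) ≠ 0 := (Real.Gamma_pos_of_pos (by positivity)).ne'
    have e3 : Real.Gamma (s / 3 + 2 / 3) ≠ 0 := (Real.Gamma_pos_of_pos (by positivity)).ne'
    simp only [Function.comp_apply, triplingGamma, Pi.add_apply, add_zero]
    rw [Real.log_div (by positivity) (by positivity), Real.log_mul (by positivity) (by positivity),
      Real.log_mul (by positivity) (by positivity), Real.log_mul (by positivity) (by positivity),
      Real.log_mul (by positivity) (by positivity), Real.log_exp]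
    ring
  · have e : Real.exp ((y + 1 - 1) * Real.log 3) = 3 * Real.exp ((y - 1) * Real.log 3) := by
      rw [show (y + 1 - 1) * Real.log 3 = Real.log 3 + (y - 1) * Real.log 3 by ring, Real.exp_add,
        Real.exp_log (by norm_num)]
    have e2 : Real.Gamma ((y + 1) / 3 + 2 / 3) = y / 3 * Real.Gamma (y / 3) := by
      rw [← Real.Gamma_add_one (by positivity)]
      ring_nf
    rw [triplingGamma, triplingGamma, e, e2, show (y + 1) / 3 = y / 3 + 1 / 3 by ring,
      show y / 3 + 1 / 3 + 1 / 3 = y / 3 + 2 / 3 by ring]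
    field_simp
  · have e1 := Real.Gamma_pos_of_pos (s := y / 3) (by positivity)
    have e2 := Real.Gamma_pos_of_pos (s := y / 3 + 1 / 3) (by positivity)
    have e3 := Real.Gamma_pos_of_pos (s := y / 3 + 2 / 3) (by positivity)
    rw [triplingGamma]
    positivity
  · rw [triplingGamma, show (1 : ℝ) / 3 + 1 / 3 = 2 / 3 by norm_num,
      show (1 : ℝ) / 3 + 2 / 3 = 1 by norm_num, Real.Gamma_one]
    rw [sub_self, zero_mul, Real.exp_zero, mul_one, mul_one, div_self (by positivity)]

/-- Gauss's multiplication formula for `Γ` at three points. -/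
theorem Gamma_triplication {x : ℝ} (hx : -1 / 3 < x) :
    (27 : ℝ) ^ x * Real.Gamma (1 / 3 + x) * Real.Gamma (2 / 3 + x) * Real.Gamma (1 + x) =
      Real.Gamma (1 / 3) * Real.Gamma (2 / 3) * Real.Gamma (1 + 3 * x) := by
  have h13 : Real.Gamma (1 / 3) ≠ 0 := (Real.Gamma_pos_of_pos (by norm_num)).ne'
  have h23 : Real.Gamma (2 / 3) ≠ 0 := (Real.Gamma_pos_of_pos (by norm_num)).ne'
  rw [← triplingGamma_eq_Gamma (s := 1 + 3 * x) (by linarith), triplingGamma,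
    Real.rpow_def_of_pos (by norm_num), show (27 : ℝ) = 3 ^ 3 by norm_num, Real.log_pow,
    show (1 + 3 * x) / 3 = 1 / 3 + x by ring, show 1 / 3 + x + 1 / 3 = 2 / 3 + x by ring,
    show 1 / 3 + x + 2 / 3 = 1 + x by ring, show (1 + 3 * x - 1) * Real.log 3 =
      ((3 : ℕ) : ℝ) * Real.log 3 * x by push_cast; ring]
  field_simp

/-- The hypergeometric part of the `k`-th term of the well-poised series with parameters
`a = 2x + N`, `b = c = 2x`, `d = x`. -/
noncomputable def wellPoised (x : ℝ) (N k : ℕ) : ℝ :=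
  ∏ m ∈ Finset.range k, ((2 * x + N + 1 + m) * (2 * x + m) ^ 2 * (x + m) /
    ((1 + m) * (1 + N + m) ^ 2 * (1 + N + x + m)))

/-- The `k`-th term of the very-well-poised series with parameters `a = 2x + N`, `b = c = 2x`,
`d = x`. -/
noncomputable def veryWellPoised (x : ℝ) (N k : ℕ) : ℝ :=
  (2 * x + N + 2 * k) / (2 * x + N + k) * wellPoised x N k

theorem wellPoised_succ_right (x : ℝ) (N k : ℕ) : wellPoised x N (k + 1) =
    wellPoised x N k * ((2 * x + N + 1 + k) * (2 * x + k) ^ 2 * (x + k) /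
      ((1 + k) * (1 + N + k) ^ 2 * (1 + N + x + k))) :=
  Finset.prod_range_succ _ _

theorem abs_prod_div_le {x : ℝ} (h1 : -1 / 4 < x) (h2 : x < 1 / 4) (k : ℕ) :
    |∏ m ∈ Finset.range k, ((2 * x + m) / (1 + m))| ^ 2 * (2 * k + 1) ≤ 1 := by
  induction k with
  | zero => simp
  | succ k ih =>
    rw [Finset.prod_range_succ, abs_mul, mul_pow, sq_abs ((2 * x + k) / (1 + k))]
    refine le_trans ?_ ih
    rw [mul_assoc]
    refine mul_le_mul_of_nonneg_left ?_ (by positivity)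
    rw [div_pow, div_mul_eq_mul_div, div_le_iff₀ (by positivity)]
    push_cast
    have hk : (0 : ℝ) ≤ k := k.cast_nonneg
    have : (2 * x + k) ^ 2 ≤ (k + 1 / 2) ^ 2 := by
      apply sq_le_sq'
      · linarith
      · linarith
    nlinarith [mul_le_mul_of_nonneg_right this (show (0 : ℝ) ≤ 2 * (k + 1) + 1 by positivity)]

theorem wellPoised_zero_mul {x : ℝ} (hx : x ≠ 0) (h1 : -1 / 4 < x) (k : ℕ) :
    wellPoised x 0 k * (2 * x + 2 * k) =
      (2 * x + k) * (∏ m ∈ Finset.range k, ((2 * x + m) / (1 + m))) ^ 3 := by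
  induction k with
  | zero => simp [wellPoised]
  | succ k ih =>
    have hk : (0 : ℝ) ≤ k := k.cast_nonneg
    have e1 : 1 + x + k ≠ 0 := by linarith
    have e2 : (1 : ℝ) + k ≠ 0 := by linarith
    have e3 : 2 * x + k ≠ 0 := by
      rcases Nat.eq_zero_or_pos k with rfl | h
      · simpa using hx
      · have : (1 : ℝ) ≤ k := by exact_mod_cast h
        linarith
    have e4 : (∏ m ∈ Finset.range k, ((2 * x + m) / (1 + m))) ^ 3 =
        wellPoised x 0 k * (2 * x + 2 * k) / (2 * x + k) := by
      rw [eq_div_iff e3, ih, mul_comm]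
    rw [wellPoised_succ_right, Finset.prod_range_succ, mul_pow, e4]
    push_cast
    simp only [add_zero]
    field_simp
    ring

theorem wellPoised_zero_abs_le {x : ℝ} (hx : x ≠ 0) (h1 : -1 / 4 < x) (k : ℕ) :
    |wellPoised x 0 k| ≤ |∏ m ∈ Finset.range k, ((2 * x + m) / (1 + m))| ^ 3 := by
  rcases Nat.eq_zero_or_pos k with rfl | hk
  · simp [wellPoised]
  have hk : (1 : ℝ) ≤ k := by exact_mod_cast hk
  have h := congrArg abs (wellPoised_zero_mul hx h1 k)
  rw [abs_mul, abs_mul, abs_pow, abs_of_pos (by linarith : 0 < 2 * x + 2 * (k : ℝ)),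
    abs_of_pos (by linarith : 0 < 2 * x + (k : ℝ))] at h
  have hP : 0 ≤ |∏ m ∈ Finset.range k, ((2 * x + m) / (1 + m))| ^ 3 := by positivity
  nlinarith [abs_nonneg (wellPoised x 0 k)]

theorem wellPoised_abs_le {x : ℝ} (h1 : -1 / 4 < x) (N k : ℕ) :
    |wellPoised x N k| ≤ |wellPoised x 0 k| := by
  unfold wellPoised
  rw [Finset.abs_prod, Finset.abs_prod]
  refine Finset.prod_le_prod (fun _ _ => abs_nonneg _) fun m _ => ?_
  have hm : (0 : ℝ) ≤ m := m.cast_nonneg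
  have hN : (0 : ℝ) ≤ N := N.cast_nonneg
  have hf : ∀ u v : ℝ, 1 ≤ v → v ≤ u → (u + 2 * x) / (u ^ 2 * (u + x)) ≤
      (v + 2 * x) / (v ^ 2 * (v + x)) := by
    intro u v hv huv
    have a1 : 0 < u + x := by linarith
    have a2 : 0 < v + x := by linarith
    have a3 : 0 < u := by linarith
    rw [div_le_div_iff₀ (by positivity) (by positivity)]
    have b1 : (u + 2 * x) * v ^ 2 ≤ (v + 2 * x) * u ^ 2 := by
      nlinarith [mul_nonneg (sub_nonneg.2 huv) (by nlinarith : 0 ≤ u * v + 2 * x * (u + v))]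
    have b2 : 0 ≤ (v + 2 * x) * u ^ 2 := by
      have : 0 ≤ v + 2 * x := by linarith
      positivity
    calc (u + 2 * x) * (v ^ 2 * (v + x)) = ((u + 2 * x) * v ^ 2) * (v + x) := by ring
      _ ≤ ((v + 2 * x) * u ^ 2) * (u + x) := by gcongr
      _ = _ := by ring
  have e : ∀ n : ℝ, 0 ≤ n → |(2 * x + n + 1 + m) * (2 * x + m) ^ 2 * (x + m) /
      ((1 + m) * (1 + n + m) ^ 2 * (1 + n + x + m))| =
      ((1 + n + m + 2 * x) / ((1 + n + m) ^ 2 * (1 + n + m + x))) *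
        |(2 * x + m) ^ 2 * (x + m) / (1 + m)| := by
    intro n hn
    have a1 : 0 < 1 + n + m + x := by linarith
    have a2 : 0 < 1 + n + m + 2 * x := by linarith
    have a3 : 0 < (1 + n + m + 2 * x) / ((1 + n + m) ^ 2 * (1 + n + m + x)) := by positivity
    have a4 : 1 + n + x + m ≠ 0 := by linarith
    conv_rhs => rw [← abs_of_pos a3, ← abs_mul]
    congr 1
    rw [show 1 + n + x + (m : ℝ) = 1 + n + m + x by ring]
    field_simp
    ring
  rw [e N hN, e _ (by simp)]
  refine mul_le_mul_of_nonneg_right ?_ (abs_nonneg _)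
  exact hf _ _ (by simp) (by simp)

theorem wellPoised_abs_le_rpow {x : ℝ} (hx : x ≠ 0) (h1 : -1 / 4 < x) (h2 : x < 1 / 4) (N k : ℕ) :
    |wellPoised x N k| ≤ ((k : ℝ) + 1) ^ (-(3 / 2) : ℝ) := by
  refine (wellPoised_abs_le h1 N k).trans ((wellPoised_zero_abs_le hx h1 k).trans ?_)
  have h := abs_prod_div_le h1 h2 k
  set P := |∏ m ∈ Finset.range k, ((2 * x + m) / (1 + m))| with hP
  have hP0 : 0 ≤ P := abs_nonneg _
  have hk : (0 : ℝ) ≤ k := k.cast_nonneg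
  have h3 : P ^ 2 ≤ ((k : ℝ) + 1)⁻¹ := by
    rw [← one_div, le_div_iff₀ (by positivity)]
    nlinarith [sq_nonneg P]
  calc P ^ 3 = (P ^ 2) ^ (3 / 2 : ℝ) := by
        rw [← Real.rpow_natCast P 2, ← Real.rpow_mul hP0, ← Real.rpow_natCast]; norm_num
    _ ≤ (((k : ℝ) + 1)⁻¹) ^ (3 / 2 : ℝ) := by gcongr
    _ = _ := by rw [Real.inv_rpow (by positivity), Real.rpow_neg (by positivity)]

theorem veryWellPoised_abs_le {x : ℝ} (h1 : -1 / 4 < x)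
    (N k : ℕ) : |veryWellPoised x N k| ≤ 3 * |wellPoised x N k| := by
  rw [veryWellPoised, abs_mul]
  refine mul_le_mul_of_nonneg_right ?_ (abs_nonneg _)
  have hN : (0 : ℝ) ≤ N := N.cast_nonneg
  rcases Nat.eq_zero_or_pos k with rfl | hk
  · simp only [Nat.cast_zero, mul_zero, add_zero]
    calc _ ≤ (1 : ℝ) := by
          rw [abs_div]; exact div_self_le_one _
      _ ≤ 3 := by norm_num
  · have hk : (1 : ℝ) ≤ k := by exact_mod_cast hk
    rw [abs_of_nonneg (div_nonneg (by linarith) (by linarith)), div_le_iff₀ (by linarith)]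
    linarith

theorem summable_succ_rpow_neg : Summable fun k : ℕ => ((k : ℝ) + 1) ^ (-(3 / 2) : ℝ) := by
  have := (summable_nat_add_iff 1).2 (Real.summable_nat_rpow.2 (by norm_num : -(3 / 2 : ℝ) < -1))
  simpa using this

theorem veryWellPoised_abs_le_rpow {x : ℝ} (hx : x ≠ 0) (h1 : -1 / 4 < x) (h2 : x < 1 / 4)
    (N k : ℕ) : |veryWellPoised x N k| ≤ 3 * ((k : ℝ) + 1) ^ (-(3 / 2) : ℝ) :=
  (veryWellPoised_abs_le h1 N k).trans
    (mul_le_mul_of_nonneg_left (wellPoised_abs_le_rpow hx h1 h2 N k) (by norm_num))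

theorem summable_veryWellPoised {x : ℝ} (hx : x ≠ 0) (h1 : -1 / 4 < x) (h2 : x < 1 / 4)
    (N : ℕ) : Summable (veryWellPoised x N) :=
  Summable.of_norm_bounded (summable_succ_rpow_neg.mul_left 3)
    fun k => veryWellPoised_abs_le_rpow hx h1 h2 N k

theorem wellPoised_succ_left {x : ℝ} (h1 : -1 / 4 < x) (N k : ℕ) :
    wellPoised x (N + 1) k * ((2 * x + N + 1) * (1 + N + k) ^ 2 * (1 + N + x + k)) =
      wellPoised x N k * ((2 * x + N + 1 + k) * (1 + N) ^ 2 * (1 + N + x)) := by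
  have hN : (0 : ℝ) ≤ N := N.cast_nonneg
  induction k with
  | zero => simp [wellPoised]
  | succ k ih =>
    have hk : (0 : ℝ) ≤ k := k.cast_nonneg
    rw [wellPoised_succ_right, wellPoised_succ_right]
    push_cast
    have a1 : 1 + (N + 1) + x + k ≠ 0 := by linarith
    have a2 : 1 + N + x + k ≠ 0 := by linarith
    generalize wellPoised x (N + 1) k = W at *
    generalize wellPoised x N k = W' at *
    have a3 : 1 + (N + 1) + (k : ℝ) ≠ 0 := by linarith
    have a4 : 1 + N + (k : ℝ) ≠ 0 := by linarith
    have a5 : 1 + (k : ℝ) ≠ 0 := by linarith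
    rw [mul_div_assoc', mul_div_assoc', div_mul_eq_mul_div, div_mul_eq_mul_div,
      div_eq_div_iff (by positivity) (by positivity)]
    linear_combination (2 * x + (N + 1) + 1 + k) * (2 * x + k) ^ 2 * (x + k) * (1 + k) *
      (1 + N + (k + 1)) ^ 2 * (1 + N + x + (k + 1)) * ih

/-- The telescoping certificate for the recursion in `N` of the very-well-poised series. -/
noncomputable def wellPoisedCert (x : ℝ) (N k : ℕ) : ℝ :=
  -(wellPoised x N k * (k * (k + 2 * x + N + (1 - 3 * x + N)) /
    ((1 - 3 * x + N) * (2 * x + N + k))))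

/-- The ratio of consecutive sums of the very-well-poised series. -/
noncomputable def dixonRatio (x : ℝ) (N : ℕ) : ℝ :=
  (1 + 2 * x + N) * (1 - 2 * x + N) * (1 - x + N) ^ 2 /
    ((1 + N) ^ 2 * (1 + x + N) * (1 - 3 * x + N))

theorem veryWellPoised_sub {x : ℝ} (hx : x ≠ 0) (h1 : -1 / 4 < x) (h2 : x < 1 / 4)
    (N k : ℕ) : veryWellPoised x N k - dixonRatio x N * veryWellPoised x (N + 1) k =
      wellPoisedCert x N (k + 1) - wellPoisedCert x N k := by
  have hN : (0 : ℝ) ≤ N := N.cast_nonneg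
  have hk : (0 : ℝ) ≤ k := k.cast_nonneg
  have a0 : 2 * x + N + k ≠ 0 := by
    rcases Nat.eq_zero_or_pos (N + k) with h | h
    · have h' : (N : ℝ) + k = 0 := by exact_mod_cast h
      rw [add_assoc, h']; simpa using hx
    · have h' : (1 : ℝ) ≤ N + k := by exact_mod_cast h
      linarith
  have a1 : 2 * x + N + 1 ≠ 0 := by linarith
  have a2 : 1 + N + x + k ≠ 0 := by linarith
  have a4 : 1 + N + (k : ℝ) ≠ 0 := by linarith
  have a5 : 1 + (k : ℝ) ≠ 0 := by linarith
  have a6 : 1 - 3 * x + N ≠ 0 := by linarith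
  have a7 : 1 + x + N ≠ 0 := by linarith
  have a8 : 2 * x + (N + 1) + k ≠ 0 := by linarith
  have a9 : 2 * x + N + (k + 1) ≠ 0 := by linarith
  have a10 : (1 + N : ℝ) ≠ 0 := by linarith
  have h := wellPoised_succ_left h1 N k
  unfold wellPoisedCert veryWellPoised dixonRatio
  rw [wellPoised_succ_right]
  have hW : wellPoised x (N + 1) k = wellPoised x N k *
      ((2 * x + N + 1 + k) * (1 + N) ^ 2 * (1 + N + x)) /
      ((2 * x + N + 1) * (1 + N + k) ^ 2 * (1 + N + x + k)) := by
    rw [eq_div_iff (by positivity), h]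
  rw [hW]
  generalize wellPoised x N k = W
  push_cast
  have a11 : 2 * x + N + 1 + k ≠ 0 := by linarith
  rw [show 2 * x + (N + 1) + (k : ℝ) = 2 * x + N + 1 + k by ring,
    show 2 * x + N + ((k : ℝ) + 1) = 2 * x + N + 1 + k by ring,
    show 1 + N + x = 1 + x + (N : ℝ) by ring] at *
  generalize hs : 1 - 3 * x + (N : ℝ) = s at *
  field_simp
  rw [← hs]
  ring

theorem tendsto_wellPoisedCert {x : ℝ} (hx : x ≠ 0) (h1 : -1 / 4 < x) (h2 : x < 1 / 4) (N : ℕ) :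
    Tendsto (wellPoisedCert x N) atTop (𝓝 0) := by
  have hN : (0 : ℝ) ≤ N := N.cast_nonneg
  have hlim : Tendsto (fun k : ℕ => ((3 + 2 * N) * 8 : ℝ) * ((k : ℝ) + 1) ^ (-(1 / 2) : ℝ))
      atTop (𝓝 0) := by
    have : Tendsto (fun k : ℕ => ((k : ℝ) + 1) ^ (-(1 / 2) : ℝ)) atTop (𝓝 0) :=
      (tendsto_rpow_neg_atTop (by norm_num)).comp
        (tendsto_atTop_add_const_right _ _ tendsto_natCast_atTop_atTop)
    simpa using this.const_mul ((3 + 2 * N) * 8 : ℝ)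
  refine squeeze_zero_norm (fun k => ?_) hlim
  rw [wellPoisedCert, norm_neg, norm_mul, Real.norm_eq_abs, Real.norm_eq_abs]
  have hk : (0 : ℝ) ≤ k := k.cast_nonneg
  have hw := wellPoised_abs_le_rpow hx h1 h2 N k
  have hc : |k * (k + 2 * x + N + (1 - 3 * x + N)) / ((1 - 3 * x + N) * (2 * x + N + k))| ≤
      ((3 + 2 * N) * 8 : ℝ) * ((k : ℝ) + 1) := by
    rcases Nat.eq_zero_or_pos k with rfl | hk1
    · simp; positivity
    have hk1 : (1 : ℝ) ≤ k := by exact_mod_cast hk1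
    have b1 : (1 / 4 : ℝ) ≤ 1 - 3 * x + N := by linarith
    have b2 : (1 / 2 : ℝ) * k ≤ 2 * x + N + k := by linarith
    have b3 : 0 ≤ k + 2 * x + N + (1 - 3 * x + N) := by linarith
    have b6 : 0 < 1 - 3 * x + N := by linarith
    have b7 : 0 < 2 * x + N + k := by linarith
    rw [abs_of_nonneg (by positivity), div_le_iff₀ (by positivity)]
    have b4 : (1 / 4 : ℝ) * (1 / 2 * k) ≤ (1 - 3 * x + N) * (2 * x + N + k) := by gcongr
    have b5 : k + 2 * x + N + (1 - 3 * x + N) ≤ (3 + 2 * N) * ((k : ℝ) + 1) := by nlinarith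
    calc k * (k + 2 * x + N + (1 - 3 * x + N)) ≤ k * ((3 + 2 * N) * ((k : ℝ) + 1)) := by gcongr
      _ = ((3 + 2 * N) * 8 : ℝ) * ((k : ℝ) + 1) * ((1 / 4 : ℝ) * (1 / 2 * k)) := by ring
      _ ≤ _ := by gcongr
  calc _ ≤ ((k : ℝ) + 1) ^ (-(3 / 2) : ℝ) * (((3 + 2 * N) * 8 : ℝ) * ((k : ℝ) + 1)) := by gcongr
    _ = ((3 + 2 * N) * 8 : ℝ) * (((k : ℝ) + 1) ^ (-(3 / 2) : ℝ) * ((k : ℝ) + 1) ^ (1 : ℝ)) := by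
      rw [Real.rpow_one]; ring
    _ = _ := by rw [← Real.rpow_add (by positivity)]; norm_num

theorem tsum_veryWellPoised_eq {x : ℝ} (hx : x ≠ 0) (h1 : -1 / 4 < x) (h2 : x < 1 / 4) (N : ℕ) :
    ∑' k, veryWellPoised x N k = dixonRatio x N * ∑' k, veryWellPoised x (N + 1) k := by
  have s1 := (summable_veryWellPoised hx h1 h2 N).hasSum
  have s2 := ((summable_veryWellPoised hx h1 h2 (N + 1)).hasSum).mul_left (dixonRatio x N)
  have h := (s1.sub s2).tendsto_sum_nat
  have h' : (fun n => ∑ k ∈ Finset.range n, (veryWellPoised x N k -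
      dixonRatio x N * veryWellPoised x (N + 1) k)) = wellPoisedCert x N := by
    ext n
    rw [Finset.sum_congr rfl fun k _ => veryWellPoised_sub hx h1 h2 N k,
      Finset.sum_range_sub]
    simp [wellPoisedCert]
  rw [h'] at h
  exact sub_eq_zero.1 (tendsto_nhds_unique h (tendsto_wellPoisedCert hx h1 h2 N))

theorem tendsto_tsum_veryWellPoised {x : ℝ} (hx : x ≠ 0) (h1 : -1 / 4 < x) (h2 : x < 1 / 4) :
    Tendsto (fun N => ∑' k, veryWellPoised x N k) atTop (𝓝 1) := by
  have h : Tendsto (fun N => ∑' k, veryWellPoised x N k) atTop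
      (𝓝 (∑' k : ℕ, if k = 0 then (1 : ℝ) else 0)) := by
    refine tendsto_tsum_of_dominated_convergence (summable_succ_rpow_neg.mul_left 3) ?_
      (Eventually.of_forall fun N k => veryWellPoised_abs_le_rpow hx h1 h2 N k)
    intro k
    rcases Nat.eq_zero_or_pos k with rfl | hk
    · refine tendsto_const_nhds.congr' ?_
      filter_upwards [eventually_ge_atTop 1] with N hN
      have hN : (1 : ℝ) ≤ N := by exact_mod_cast hN
      have : 2 * x + N ≠ 0 := by linarith
      simp [veryWellPoised, wellPoised, this]
    · simp only [hk.ne', if_false]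
      have hw : Tendsto (fun N => 3 * |wellPoised x N k|) atTop (𝓝 0) := by
        have : Tendsto (fun N => wellPoised x N k) atTop (𝓝 (∏ m ∈ Finset.range k, (0 : ℝ))) := by
          refine tendsto_finsetProd _ fun m _ => ?_
          have hm : (0 : ℝ) ≤ m := m.cast_nonneg
          have hb : Tendsto (fun N : ℕ => |(2 * x + m) ^ 2 * (x + m)| * (4 / ((N : ℝ) + 1)))
              atTop (𝓝 0) := by
            have := (tendsto_const_div_atTop_nhds_zero_nat (4 : ℝ)).comp (tendsto_add_atTop_nat 1)
            simpa only [Function.comp_def, mul_zero, Nat.cast_add, Nat.cast_one] using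
              this.const_mul (|(2 * x + m) ^ 2 * (x + m)|)
          refine squeeze_zero_norm (fun N => ?_) hb
          have hN : (0 : ℝ) ≤ N := N.cast_nonneg
          rw [mul_assoc, mul_comm (2 * x + N + 1 + (m : ℝ)), mul_div_assoc, norm_mul]
          refine mul_le_mul_of_nonneg_left ?_ (norm_nonneg _)
          have b : 0 < 1 + N + x + (m : ℝ) := by linarith
          rw [Real.norm_of_nonneg (div_nonneg (by linarith) (by positivity)),
            div_le_div_iff₀ (by positivity) (by positivity)]
          have c1 : 2 * x + N + 1 + m ≤ 2 * (1 + N + x + (m : ℝ)) := by linarith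
          have c2 : (N : ℝ) + 1 ≤ (1 + N + m) ^ 2 := by nlinarith
          calc (2 * x + N + 1 + m) * ((N : ℝ) + 1)
              ≤ (2 * (1 + N + x + (m : ℝ))) * (1 + N + m) ^ 2 := by gcongr
            _ = 1 * (2 * (1 + N + m) ^ 2 * (1 + N + x + (m : ℝ))) := by ring
            _ ≤ (2 * (1 + m)) * (2 * (1 + N + m) ^ 2 * (1 + N + x + (m : ℝ))) := by
              gcongr; linarith
            _ = _ := by ring
        rw [Finset.prod_const, Finset.card_range, zero_pow hk.ne'] at this
        simpa using this.abs.const_mul 3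
      exact squeeze_zero_norm (fun N => veryWellPoised_abs_le h1 N k) hw
  simpa using h

theorem prod_range_eq_GammaSeq {s : ℝ} (hs : 0 < s) {n : ℕ} (hn : n ≠ 0) :
    ∏ j ∈ Finset.range (n + 1), (s + j) = (n : ℝ) ^ s * n.factorial / Real.GammaSeq s n := by
  have h1 : ∏ j ∈ Finset.range (n + 1), (s + j) ≠ 0 :=
    Finset.prod_ne_zero_iff.2 fun j _ => by positivity
  have h2 : (n : ℝ) ^ s ≠ 0 := (Real.rpow_pos_of_pos (by positivity) s).ne'
  rw [Real.GammaSeq, div_div_cancel₀ (by positivity)]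

theorem prod_dixonRatio {x : ℝ} (h1 : -1 / 4 < x) (h2 : x < 1 / 4) {n : ℕ} (hn : n ≠ 0) :
    ∏ i ∈ Finset.range (n + 1), dixonRatio x i =
      Real.GammaSeq 1 n ^ 2 * Real.GammaSeq (1 + x) n * Real.GammaSeq (1 - 3 * x) n /
      (Real.GammaSeq (1 + 2 * x) n * Real.GammaSeq (1 - 2 * x) n * Real.GammaSeq (1 - x) n ^ 2) := by
  simp only [dixonRatio]
  rw [Finset.prod_div_distrib, Finset.prod_mul_distrib, Finset.prod_mul_distrib,
    Finset.prod_mul_distrib, Finset.prod_mul_distrib, Finset.prod_pow, Finset.prod_pow,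
    prod_range_eq_GammaSeq (by linarith) hn, prod_range_eq_GammaSeq (by linarith) hn,
    prod_range_eq_GammaSeq (by linarith) hn, prod_range_eq_GammaSeq (by linarith) hn,
    prod_range_eq_GammaSeq (by linarith) hn, prod_range_eq_GammaSeq (by linarith) hn]
  have hn0 : (0 : ℝ) < n := by positivity
  have hr : (n : ℝ) ^ (1 + 2 * x) * (n : ℝ) ^ (1 - 2 * x) * ((n : ℝ) ^ (1 - x)) ^ 2 =
      ((n : ℝ) ^ (1 : ℝ)) ^ 2 * (n : ℝ) ^ (1 + x) * (n : ℝ) ^ (1 - 3 * x) := by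
    rw [← Real.rpow_natCast (_ ^ _), ← Real.rpow_natCast (_ ^ _), ← Real.rpow_mul hn0.le,
      ← Real.rpow_mul hn0.le, ← Real.rpow_add hn0, ← Real.rpow_add hn0, ← Real.rpow_add hn0,
      ← Real.rpow_add hn0]
    congr 1
    push_cast
    ring
  have hg : ∀ s : ℝ, 0 < s → Real.GammaSeq s n ≠ 0 := by
    intro s hs
    have := prod_range_eq_GammaSeq hs hn
    intro h0
    rw [h0, div_zero] at this
    exact Finset.prod_ne_zero_iff.2 (fun j _ => by positivity) this
  have g1 := hg 1 (by linarith)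
  have g2 := hg (1 + x) (by linarith)
  have g3 := hg (1 - 3 * x) (by linarith)
  have g4 := hg (1 + 2 * x) (by linarith)
  have g5 := hg (1 - 2 * x) (by linarith)
  have g6 := hg (1 - x) (by linarith)
  have r1 := (Real.rpow_pos_of_pos hn0 1).ne'
  have r2 := (Real.rpow_pos_of_pos hn0 (1 + x)).ne'
  have r3 := (Real.rpow_pos_of_pos hn0 (1 - 3 * x)).ne'
  have r4 : (n.factorial : ℝ) ≠ 0 := by positivity
  generalize Real.GammaSeq 1 n = G1 at *
  generalize Real.GammaSeq (1 + x) n = G2 at *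
  generalize Real.GammaSeq (1 - 3 * x) n = G3 at *
  generalize Real.GammaSeq (1 + 2 * x) n = G4 at *
  generalize Real.GammaSeq (1 - 2 * x) n = G5 at *
  generalize Real.GammaSeq (1 - x) n = G6 at *
  generalize (n : ℝ) ^ (1 : ℝ) = A1 at *
  generalize (n : ℝ) ^ (1 + x) = A2 at *
  generalize (n : ℝ) ^ (1 - 3 * x) = A3 at *
  generalize (n : ℝ) ^ (1 + 2 * x) = A4 at *
  generalize (n : ℝ) ^ (1 - 2 * x) = A5 at *
  generalize (n : ℝ) ^ (1 - x) = A6 at *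
  generalize (n.factorial : ℝ) = f at *
  field_simp
  linear_combination hr

/-- Dixon's theorem for the cubes of the binomial coefficients `(2x)_k / k!`. -/
theorem dixon_cube {x : ℝ} (hx : x ≠ 0) (h1 : -1 / 4 < x) (h2 : x < 1 / 4) :
    HasSum (fun k : ℕ => (∏ m ∈ Finset.range k, ((2 * x + m) / (1 + m))) ^ 3)
      (Real.Gamma (1 + x) * Real.Gamma (1 - 3 * x) /
        (Real.Gamma (1 + 2 * x) * Real.Gamma (1 - 2 * x) * Real.Gamma (1 - x) ^ 2)) := by
  have e : veryWellPoised x 0 =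
      fun k : ℕ => (∏ m ∈ Finset.range k, ((2 * x + m) / (1 + m))) ^ 3 := by
    ext k
    have e3 : 2 * x + k ≠ 0 := by
      rcases Nat.eq_zero_or_pos k with rfl | h
      · simpa using hx
      · have : (1 : ℝ) ≤ k := by exact_mod_cast h
        linarith
    rw [veryWellPoised, Nat.cast_zero, add_zero, div_mul_eq_mul_div, div_eq_iff e3, mul_comm,
      wellPoised_zero_mul hx h1, mul_comm]
  have hs := (summable_veryWellPoised hx h1 h2 0).hasSum
  rw [e] at hs
  convert hs using 1
  rw [← e]
  have hprod : ∀ n, ∑' k, veryWellPoised x 0 k =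
      (∏ i ∈ Finset.range n, dixonRatio x i) * ∑' k, veryWellPoised x n k := by
    intro n
    induction n with
    | zero => simp
    | succ n ih => rw [ih, Finset.prod_range_succ, tsum_veryWellPoised_eq hx h1 h2 n]; ring
  have hG : ∀ s : ℝ, Tendsto (Real.GammaSeq s) atTop (𝓝 (Real.Gamma s)) :=
    Real.GammaSeq_tendsto_Gamma
  have hpos : ∀ s : ℝ, 0 < s → Real.Gamma s ≠ 0 := fun s hs => (Real.Gamma_pos_of_pos hs).ne'
  have p1 := hpos (1 + 2 * x) (by linarith)
  have p2 := hpos (1 - 2 * x) (by linarith)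
  have p3 := hpos (1 - x) (by linarith)
  have hlim := (((((hG 1).pow 2).mul (hG (1 + x))).mul (hG (1 - 3 * x))).div
    (((hG (1 + 2 * x)).mul (hG (1 - 2 * x))).mul ((hG (1 - x)).pow 2)) (by positivity)).mul
    ((tendsto_tsum_veryWellPoised hx h1 h2).comp (tendsto_add_atTop_nat 1))
  rw [Real.Gamma_one, one_pow, one_mul, mul_one] at hlim
  refine tendsto_nhds_unique hlim (tendsto_const_nhds.congr' ?_)
  filter_upwards [eventually_ne_atTop 0] with n hn
  rw [hprod (n + 1), prod_dixonRatio h1 h2 hn]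
  rfl

theorem hasDerivAt_sin_pi_sub (p z : ℂ) : HasDerivAt (fun z : ℂ => Complex.sin (Real.pi * (z - p)))
    (Complex.cos (Real.pi * (z - p)) * Real.pi) z := by
  have : HasDerivAt (fun z : ℂ => (Real.pi : ℂ) * (z - p)) (Real.pi : ℂ) z := by
    simpa using ((hasDerivAt_id z).sub_const p).const_mul (Real.pi : ℂ)
  exact this.csin

theorem sin_pi_sub_eq_zero {p z : ℂ} (h : Complex.sin (Real.pi * (z - p)) = 0) :
    ∃ n : ℤ, z = p + n := by
  obtain ⟨n, hn⟩ := Complex.sin_eq_zero_iff.1 h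
  refine ⟨n, ?_⟩
  have hpi : (Real.pi : ℂ) ≠ 0 := by exact_mod_cast Real.pi_ne_zero
  have : (z - p) = n := mul_left_cancel₀ hpi (by rw [hn]; ring)
  rw [← this]; ring

/-- An entire function vanishing on `p + ℤ` is divisible by `sin (π (z - p))`. -/
theorem exists_eq_mul_sin {f : ℂ → ℂ} (hf : Differentiable ℂ f) {p : ℂ}
    (h0 : ∀ n : ℤ, f (p + n) = 0) :
    ∃ g : ℂ → ℂ, Differentiable ℂ g ∧ ∀ z, f z = g z * Complex.sin (Real.pi * (z - p)) := by
  set s : ℂ → ℂ := fun z => Complex.sin (Real.pi * (z - p)) with hs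
  have hsd : Differentiable ℂ s := fun z => (hasDerivAt_sin_pi_sub p z).differentiableAt
  have hzero : ∀ z, s z = 0 → f z = 0 := by
    intro z hz
    obtain ⟨n, rfl⟩ := sin_pi_sub_eq_zero hz
    exact h0 n
  refine ⟨fun z => if s z = 0 then deriv f z / deriv s z else f z / s z, fun z₀ => ?_, fun z => ?_⟩
  · by_cases hz : s z₀ = 0
    · have hd : deriv s z₀ ≠ 0 := by
        rw [(hasDerivAt_sin_pi_sub p z₀).deriv]
        intro h
        have hpi : (Real.pi : ℂ) ≠ 0 := by exact_mod_cast Real.pi_ne_zero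
        have hc : Complex.cos (Real.pi * (z₀ - p)) = 0 := by simpa [hpi] using h
        have := Complex.sin_sq_add_cos_sq (Real.pi * (z₀ - p))
        simp only [hs] at hz
        simp [hz, hc] at this
      have d1 : Differentiable ℂ (dslope f z₀) := by
        rw [← differentiableOn_univ, Complex.differentiableOn_dslope univ_mem]
        exact hf.differentiableOn
      have d2 : Differentiable ℂ (dslope s z₀) := by
        rw [← differentiableOn_univ, Complex.differentiableOn_dslope univ_mem]
        exact hsd.differentiableOn
      have hne : ∀ᶠ z in 𝓝 z₀, dslope s z₀ z ≠ 0 :=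
        d2.continuous.continuousAt.eventually_ne (by rwa [dslope_same])
      refine (((d1 z₀).div (d2 z₀) (by rwa [dslope_same])).congr_of_eventuallyEq ?_)
      filter_upwards [hne] with z hz'
      by_cases hzz : z = z₀
      · subst hzz
        simp [hz, dslope_same]
      · have e1 : s z = (z - z₀) * dslope s z₀ z := by
          have := sub_smul_dslope s z₀ z
          rw [hz, sub_zero] at this
          rw [← this, smul_eq_mul]
        have e2 : f z = (z - z₀) * dslope f z₀ z := by
          have := sub_smul_dslope f z₀ z
          rw [hzero _ hz, sub_zero] at this
          rw [← this, smul_eq_mul]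
        have hzz' : z - z₀ ≠ 0 := sub_ne_zero.2 hzz
        have : s z ≠ 0 := by rw [e1]; exact mul_ne_zero hzz' hz'
        simp only [this, if_false, Pi.div_apply]
        rw [e1, e2, mul_div_mul_left _ _ hzz']
    · refine ((hf z₀).div (hsd z₀) hz).congr_of_eventuallyEq ?_
      filter_upwards [hsd.continuous.continuousAt.eventually_ne hz] with z hz'
      simp [hz']
  · by_cases hz : s z = 0
    · rw [hzero z hz, show Complex.sin (Real.pi * (z - p)) = 0 from hz, mul_zero]
    · simp only [hz, if_false]
      rw [div_mul_cancel₀]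
      exact hz

theorem sinh_abs_le_norm_sin (z : ℂ) (p : ℝ) :
    Real.sinh (Real.pi * |z.im|) ≤ ‖Complex.sin (Real.pi * (z - p))‖ := by
  have h : ‖Complex.sin (Real.pi * (z - p))‖ ^ 2 =
      Real.sin (Real.pi * (z.re - p)) ^ 2 + Real.sinh (Real.pi * z.im) ^ 2 := by
    rw [← Complex.normSq_eq_norm_sq, show (Real.pi : ℂ) * (z - p) =
      ((Real.pi * (z.re - p) : ℝ) : ℂ) + ((Real.pi * z.im : ℝ) : ℂ) * Complex.I by
        conv_lhs => rw [← Complex.re_add_im z]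
        push_cast; ring, Complex.sin_add_mul_I]
    rw [← Complex.ofReal_sin, ← Complex.ofReal_cosh, ← Complex.ofReal_cos, ← Complex.ofReal_sinh,
      ← Complex.ofReal_mul, ← Complex.ofReal_mul, Complex.normSq_add_mul_I]
    have := Real.cosh_sq (Real.pi * z.im)
    have h2 := Real.sin_sq_add_cos_sq (Real.pi * (z.re - p))
    generalize Real.cosh (Real.pi * z.im) = a at *
    generalize Real.sinh (Real.pi * z.im) = b at *
    generalize Real.sin (Real.pi * (z.re - p)) = c at *
    generalize Real.cos (Real.pi * (z.re - p)) = d at *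
    linear_combination c ^ 2 * this + b ^ 2 * h2
  have h3 : Real.sinh (Real.pi * |z.im|) ^ 2 = Real.sinh (Real.pi * z.im) ^ 2 := by
    rcases abs_choice z.im with h | h <;> rw [h]
    rw [mul_neg, Real.sinh_neg]; ring
  refine le_of_sq_le_sq ?_ (norm_nonneg _)
  rw [h, h3]
  nlinarith [sq_nonneg (Real.sin (Real.pi * (z.re - p)))]

theorem exp_le_four_mul_norm_sin {z : ℂ} (hz : 1 ≤ |z.im|) (p : ℝ) :
    Real.exp (Real.pi * |z.im|) ≤ 4 * ‖Complex.sin (Real.pi * (z - p))‖ := by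
  have h := sinh_abs_le_norm_sin z p
  rw [Real.sinh_eq] at h
  have h1 : Real.exp (-(Real.pi * |z.im|)) ≤ 1 := Real.exp_le_one_iff.2 (by
    have := Real.pi_pos; have := abs_nonneg z.im; nlinarith)
  have h2 : 2 ≤ Real.exp (Real.pi * |z.im|) := by
    have := Real.add_one_le_exp (Real.pi * |z.im|)
    nlinarith [Real.pi_gt_three]
  linarith

theorem norm_exp_two_pi_I_le (z : ℂ) (ε : ℝ) (hε : |ε| = 1) :
    ‖Complex.exp (ε * (2 * Real.pi * Complex.I * z))‖ ≤ Real.exp (2 * Real.pi * |z.im|) := by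
  rw [Complex.norm_exp]
  apply Real.exp_le_exp.2
  have h : (ε * (2 * Real.pi * Complex.I * z) : ℂ).re = -(2 * Real.pi * (ε * z.im)) := by
    simp [Complex.mul_re, Complex.mul_im]; ring
  rw [h]
  have h1 : -(ε * z.im) ≤ |z.im| := by
    calc -(ε * z.im) ≤ |ε * z.im| := neg_le_abs _
      _ = |z.im| := by rw [abs_mul, hε, one_mul]
  nlinarith [Real.pi_pos]

/-- An entire function of period `1` and exponential type less than `3π` in the imaginary
direction is a trigonometric polynomial of degree at most one. -/
theorem eq_trigPolynomial_of_growth {f : ℂ → ℂ} (hf : Differentiable ℂ f)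
    (hper : ∀ z, f (z + 1) = f z) {C c : ℝ} (hc : c < 3 * Real.pi)
    (hb : ∀ z, ‖f z‖ ≤ C * Real.exp (c * |z.im|)) :
    ∃ c₀ c₁ c₂ : ℂ, ∀ z, f z = c₀ + c₁ * Complex.exp (2 * Real.pi * Complex.I * z) +
      c₂ * Complex.exp (-(2 * Real.pi * Complex.I * z)) := by
  have hC : 0 ≤ C := by
    have := (norm_nonneg _).trans (hb 0)
    simpa using this
  set c₀ : ℂ := (f 0 + f (1 / 2 : ℝ)) / 2 with hc₀
  set c₁ : ℂ := ((f 0 - f (1 / 2 : ℝ)) / 2 - Complex.I * (f (1 / 4 : ℝ) - c₀)) / 2 with hc₁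
  set c₂ : ℂ := ((f 0 - f (1 / 2 : ℝ)) / 2 + Complex.I * (f (1 / 4 : ℝ) - c₀)) / 2 with hc₂
  refine ⟨c₀, c₁, c₂, ?_⟩
  set g : ℂ → ℂ := fun z => f z - (c₀ + c₁ * Complex.exp (2 * Real.pi * Complex.I * z) +
      c₂ * Complex.exp (-(2 * Real.pi * Complex.I * z))) with hg
  have hgd : Differentiable ℂ g := by fun_prop
  have hgp : ∀ z, g (z + 1) = g z := by
    intro z
    simp only [hg, hper]
    rw [mul_add, mul_one, Complex.exp_add, neg_add, Complex.exp_add, Complex.exp_neg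
      (2 * Real.pi * Complex.I), Complex.exp_two_pi_mul_I]
    simp
  have hgn : ∀ (n : ℤ) z, g (z + n) = g z := by
    have hP : Function.Periodic g 1 := hgp
    intro n z
    simpa using hP.int_mul n z
  have g0 : g (0 : ℝ) = 0 := by
    simp only [hg, hc₁, hc₂, hc₀]
    simp
    ring
  have g2 : g (1 / 2 : ℝ) = 0 := by
    have e : 2 * Real.pi * Complex.I * ((1 / 2 : ℝ) : ℂ) = Real.pi * Complex.I := by
      push_cast; ring
    simp only [hg]
    rw [e, Complex.exp_neg, Complex.exp_pi_mul_I]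
    simp only [hc₁, hc₂, hc₀]
    norm_num
    ring
  have g4 : g (1 / 4 : ℝ) = 0 := by
    have e : 2 * Real.pi * Complex.I * ((1 / 4 : ℝ) : ℂ) = Real.pi / 2 * Complex.I := by
      push_cast; ring
    simp only [hg]
    rw [e, Complex.exp_neg, Complex.exp_pi_div_two_mul_I, Complex.inv_I]
    simp only [hc₁, hc₂]
    linear_combination (c₀ - f ((1 / 4 : ℝ) : ℂ)) * (-1 : ℂ) * Complex.I_sq
  have hsin : ∀ (p q : ℝ), (∀ n : ℤ, p - q ≠ n) → ∀ n : ℤ,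
      Complex.sin (Real.pi * ((p : ℂ) + n - q)) ≠ 0 := by
    intro p q hpq n h
    obtain ⟨m, hm⟩ := sin_pi_sub_eq_zero h
    apply hpq (m - n)
    have : ((p - q : ℝ) : ℂ) = ((m - n : ℤ) : ℂ) := by
      push_cast
      linear_combination hm
    exact_mod_cast this
  have hq : ∀ (a : ℚ), a.den ≠ 1 → ∀ n : ℤ, (a : ℝ) ≠ n := by
    intro a ha n h
    apply ha
    have : a = n := by exact_mod_cast h
    rw [this]; simp
  obtain ⟨u, hud, hu⟩ := exists_eq_mul_sin hgd (p := (0 : ℝ)) (fun n => by rw [hgn, g0])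
  have hu2 : ∀ n : ℤ, u ((1 / 2 : ℝ) + n) = 0 := by
    intro n
    have := hu ((1 / 2 : ℝ) + n)
    rw [hgn, g2] at this
    refine (mul_eq_zero.1 this.symm).resolve_right (hsin _ _ ?_ n)
    intro k hk
    exact hq (1 / 2) (by norm_num) k (by push_cast; linarith)
  have hu4 : ∀ n : ℤ, u ((1 / 4 : ℝ) + n) = 0 := by
    intro n
    have := hu ((1 / 4 : ℝ) + n)
    rw [hgn, g4] at this
    refine (mul_eq_zero.1 this.symm).resolve_right (hsin _ _ ?_ n)
    intro k hk
    exact hq (1 / 4) (by norm_num) k (by push_cast; linarith)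
  obtain ⟨v, hvd, hv⟩ := exists_eq_mul_sin hud hu2
  have hv4 : ∀ n : ℤ, v ((1 / 4 : ℝ) + n) = 0 := by
    intro n
    have := hv ((1 / 4 : ℝ) + n)
    rw [hu4] at this
    refine (mul_eq_zero.1 this.symm).resolve_right (hsin _ _ ?_ n)
    intro k hk
    exact hq (-1 / 4) (by norm_num) k (by push_cast; linarith)
  obtain ⟨h, hhd, hh⟩ := exists_eq_mul_sin hvd hv4
  set S : ℂ → ℂ := fun z => Complex.sin (Real.pi * (z - (1 / 4 : ℝ))) *
    Complex.sin (Real.pi * (z - (1 / 2 : ℝ))) * Complex.sin (Real.pi * (z - (0 : ℝ))) with hS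
  have hgS : ∀ z, g z = h z * S z := by
    intro z
    rw [hu, hv, hh, hS]; ring
  have hSp : ∀ z, S (z + 1) = - S z := by
    intro z
    have : ∀ p : ℝ, Complex.sin (Real.pi * (z + 1 - p)) = -Complex.sin (Real.pi * (z - p)) := by
      intro p
      rw [← Complex.sin_add_pi]; congr 1; ring
    simp only [hS, this]; ring
  have hSd : Differentiable ℂ S := by fun_prop
  have hhp : ∀ z, h (z + 1) = - h z := by
    have hz : ∀ z, (h (z + 1) + h z) * S z = 0 := by
      intro z
      have := hgp z
      rw [hgS, hgS, hSp] at this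
      linear_combination -this
    have hd : Differentiable ℂ fun z => h (z + 1) + h z := by fun_prop
    have hmul := AnalyticOnNhd.eq_zero_or_eq_zero_of_mul_eq_zero (U := Set.univ)
      (hd.differentiableOn.analyticOnNhd isOpen_univ)
      (hSd.differentiableOn.analyticOnNhd isOpen_univ) (fun z _ => hz z) isPreconnected_univ
    rcases hmul with hmul | hmul
    · intro z
      exact eq_neg_of_add_eq_zero_left (hmul z trivial)
    · exfalso
      have h3 := hmul (Complex.I) trivial
      have e : ∀ p : ℝ, Complex.sin (Real.pi * (Complex.I - p)) ≠ 0 := by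
        intro p h0
        obtain ⟨n, hn⟩ := sin_pi_sub_eq_zero h0
        have := congrArg Complex.im hn
        simp at this
      simp only [hS] at h3
      exact mul_ne_zero (mul_ne_zero (e _) (e _)) (e _) h3
  set C' : ℝ := C + ‖c₀‖ + ‖c₁‖ + ‖c₂‖ with hC'
  set c' : ℝ := max c (2 * Real.pi) with hc'
  have hc'3 : c' < 3 * Real.pi := max_lt hc (by linarith [Real.pi_pos])
  have hgb : ∀ z, ‖g z‖ ≤ C' * Real.exp (c' * |z.im|) := by
    intro z
    have e1 : Real.exp (c * |z.im|) ≤ Real.exp (c' * |z.im|) :=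
      Real.exp_le_exp.2 (mul_le_mul_of_nonneg_right (le_max_left _ _) (abs_nonneg _))
    have e2 : Real.exp (2 * Real.pi * |z.im|) ≤ Real.exp (c' * |z.im|) :=
      Real.exp_le_exp.2 (mul_le_mul_of_nonneg_right (le_max_right _ _) (abs_nonneg _))
    have e3 : 1 ≤ Real.exp (c' * |z.im|) := Real.one_le_exp (by
      have : 0 ≤ c' := (by positivity : 0 ≤ 2 * Real.pi).trans (le_max_right _ _)
      positivity)
    have n1 : ‖Complex.exp (2 * Real.pi * Complex.I * z)‖ ≤ Real.exp (c' * |z.im|) := by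
      simpa using (norm_exp_two_pi_I_le z 1 (by simp)).trans e2
    have n2 : ‖Complex.exp (-(2 * Real.pi * Complex.I * z))‖ ≤ Real.exp (c' * |z.im|) := by
      simpa using (norm_exp_two_pi_I_le z (-1) (by simp)).trans e2
    calc ‖g z‖ ≤ ‖f z‖ + (‖c₀‖ + ‖c₁ * Complex.exp (2 * Real.pi * Complex.I * z)‖ +
        ‖c₂ * Complex.exp (-(2 * Real.pi * Complex.I * z))‖) :=
          (norm_sub_le _ _).trans (add_le_add_right (norm_add₃_le) _)
      _ ≤ C * Real.exp (c' * |z.im|) + (‖c₀‖ * Real.exp (c' * |z.im|) +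
          ‖c₁‖ * Real.exp (c' * |z.im|) + ‖c₂‖ * Real.exp (c' * |z.im|)) := by
        rw [norm_mul, norm_mul]
        gcongr
        · exact (hb z).trans (by gcongr)
        · exact le_mul_of_one_le_right (norm_nonneg _) e3
      _ = _ := by rw [hC']; ring
  have hC'0 : 0 ≤ C' := by positivity
  have hhb : ∀ z : ℂ, 1 ≤ |z.im| → ‖h z‖ ≤ 64 * C' * Real.exp (-((3 * Real.pi - c') * |z.im|)) := by
    intro z hz
    have h1 : Real.exp (3 * Real.pi * |z.im|) ≤ 64 * ‖S z‖ := by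
      have := fun p => exp_le_four_mul_norm_sin hz p
      calc Real.exp (3 * Real.pi * |z.im|) = Real.exp (Real.pi * |z.im|) *
            Real.exp (Real.pi * |z.im|) * Real.exp (Real.pi * |z.im|) := by
              rw [← Real.exp_add, ← Real.exp_add]; congr 1; ring
        _ ≤ _ := mul_le_mul (mul_le_mul (this (1 / 4)) (this (1 / 2)) (by positivity)
          (by positivity)) (this 0) (by positivity) (by positivity)
        _ = 64 * ‖S z‖ := by rw [hS]; simp only [norm_mul]; ring
    have h2 := hgb z
    rw [hgS, norm_mul] at h2
    have h3 : Real.exp (-((3 * Real.pi - c') * |z.im|)) * Real.exp (3 * Real.pi * |z.im|) =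
        Real.exp (c' * |z.im|) := by rw [← Real.exp_add]; congr 1; ring
    have h4 : 0 < Real.exp (3 * Real.pi * |z.im|) := Real.exp_pos _
    refine le_of_mul_le_mul_right ?_ h4
    calc ‖h z‖ * Real.exp (3 * Real.pi * |z.im|) ≤ ‖h z‖ * (64 * ‖S z‖) := by gcongr
      _ = 64 * (‖h z‖ * ‖S z‖) := by ring
      _ ≤ 64 * (C' * Real.exp (c' * |z.im|)) := by gcongr
      _ = _ := by rw [← h3]; ring
  have hbdd : Bornology.IsBounded (Set.range h) := by
    obtain ⟨B, hB⟩ := (isCompact_Icc.reProdIm isCompact_Icc : IsCompact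
      (Set.Icc (0 : ℝ) 1 ×ℂ Set.Icc (-1 : ℝ) 1)).exists_bound_of_continuousOn
      hhd.continuous.continuousOn
    refine isBounded_iff_forall_norm_le.2 ⟨max (64 * C') B, ?_⟩
    rintro _ ⟨z, rfl⟩
    by_cases hz : 1 ≤ |z.im|
    · refine le_max_of_le_left ((hhb z hz).trans ?_)
      refine mul_le_of_le_one_right (by positivity) (Real.exp_le_one_iff.2 ?_)
      have : 0 ≤ 3 * Real.pi - c' := by linarith
      have : 0 ≤ (3 * Real.pi - c') * |z.im| := by positivity
      linarith
    · have hn : ∀ w, ‖h (w + 1)‖ = ‖h w‖ := fun w => by rw [hhp, norm_neg]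
      have hP : Function.Periodic (fun w => ‖h w‖) 1 := hn
      have : ‖h (z - ⌊z.re⌋)‖ = ‖h z‖ := by simpa using hP.sub_int_mul_eq (x := z) ⌊z.re⌋
      rw [← this]
      refine le_max_of_le_right (hB _ ?_)
      rw [Complex.mem_reProdIm]
      constructor
      · simp only [Complex.sub_re, Complex.intCast_re, Set.mem_Icc]
        exact ⟨Int.fract_nonneg _, (Int.fract_lt_one _).le⟩
      · simp only [Complex.sub_im, Complex.intCast_im, sub_zero, Set.mem_Icc]
        exact abs_le.1 (not_le.1 hz).le
  have hzero : ∀ z, h z = 0 := by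
    intro z
    have hlim : Tendsto (fun y : ℝ => 64 * C' * Real.exp (-((3 * Real.pi - c') * y))) atTop
        (𝓝 0) := by
      have : Tendsto (fun y : ℝ => Real.exp (-((3 * Real.pi - c') * y))) atTop (𝓝 0) :=
        Real.tendsto_exp_neg_atTop_nhds_zero.comp
          (tendsto_id.const_mul_atTop (by linarith))
      simpa using this.const_mul (64 * C')
    have h1 : Tendsto (fun _ : ℝ => h z) atTop (𝓝 0) := by
      refine squeeze_zero_norm' ?_ hlim
      filter_upwards [eventually_ge_atTop 1] with y hy
      rw [hhd.apply_eq_apply_of_bounded hbdd z (y * Complex.I)]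
      have him : ((y : ℂ) * Complex.I).im = y := by simp
      have := hhb (y * Complex.I) (by rw [him, abs_of_pos (by linarith)]; exact hy)
      rwa [him, abs_of_pos (by linarith)] at this
    exact tendsto_nhds_unique tendsto_const_nhds h1
  intro z
  have := hgS z
  rw [hzero, zero_mul] at this
  exact sub_eq_zero.1 this

/-- A holomorphic function on the strip `1/4 < Re z < 2` which is periodic and of exponential
type less than `3π` there is a trigonometric polynomial of degree at most one. -/
theorem eq_trigPolynomial_of_growth_strip {f : ℂ → ℂ}
    (hf : DifferentiableOn ℂ f {z | 1 / 4 < z.re ∧ z.re < 2})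
    (hper : ∀ z : ℂ, 1 / 4 < z.re → z.re < 1 → f (z + 1) = f z) {C c : ℝ} (hc : c < 3 * Real.pi)
    (hb : ∀ z : ℂ, 1 / 4 < z.re → z.re < 2 → ‖f z‖ ≤ C * Real.exp (c * |z.im|)) :
    ∃ c₀ c₁ c₂ : ℂ, ∀ z : ℂ, 1 / 4 < z.re → z.re < 2 →
      f z = c₀ + c₁ * Complex.exp (2 * Real.pi * Complex.I * z) +
        c₂ * Complex.exp (-(2 * Real.pi * Complex.I * z)) := by
  set F : ℂ → ℂ := fun z => f (z - ⌊z.re - 1 / 2⌋) with hF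
  have hopen : IsOpen {z : ℂ | 1 / 4 < z.re ∧ z.re < 2} :=
    (isOpen_lt continuous_const Complex.continuous_re).inter
      (isOpen_lt Complex.continuous_re continuous_const)
  have hFf : ∀ z : ℂ, 1 / 4 < z.re → z.re < 2 → F z = f z := by
    intro z h1 h2
    have b1 : -1 ≤ ⌊z.re - 1 / 2⌋ := by
      rw [Int.le_floor]; push_cast; linarith
    have b2 : ⌊z.re - 1 / 2⌋ < 2 := by
      rw [Int.floor_lt]; push_cast; linarith
    have b3 := Int.floor_le (z.re - 1 / 2)
    have b4 := Int.lt_floor_add_one (z.re - 1 / 2)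
    simp only [hF]
    generalize ⌊z.re - 1 / 2⌋ = n at *
    interval_cases n
    · have := hper z h1 (by push_cast at b4; linarith)
      rw [← this]; push_cast; congr 1; ring
    · simp
    · have h := hper (z - 1) (by push_cast at b3; simp; linarith) (by simp; linarith)
      rw [sub_add_cancel] at h
      rw [h]; push_cast; rfl
  have hFp : ∀ z, F (z + 1) = F z := by
    intro z
    simp only [hF, Complex.add_re, Complex.one_re]
    rw [show z.re + 1 - 1 / 2 = z.re - 1 / 2 + 1 by ring, Int.floor_add_one]
    push_cast
    congr 1; ring
  have hFn : ∀ (n : ℤ) z, F (z - n) = F z := by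
    have hP : Function.Periodic F 1 := hFp
    intro n z
    simpa using hP.sub_int_mul_eq (x := z) n
  have hmem : ∀ z : ℂ, 1 / 2 ≤ (z - ⌊z.re - 1 / 2⌋).re ∧ (z - ⌊z.re - 1 / 2⌋).re < 3 / 2 := by
    intro z
    have b3 := Int.floor_le (z.re - 1 / 2)
    have b4 := Int.lt_floor_add_one (z.re - 1 / 2)
    simp only [Complex.sub_re, Complex.intCast_re]
    constructor <;> linarith
  have hFd : Differentiable ℂ F := by
    intro z₀
    set n := ⌊z₀.re - 1 / 2⌋ with hn
    have hm : z₀ - n ∈ {z : ℂ | 1 / 4 < z.re ∧ z.re < 2} := by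
      have := hmem z₀
      constructor <;> linarith
    have hd : DifferentiableAt ℂ (fun z : ℂ => f (z - n)) z₀ := by
      have h1 := hf.differentiableAt (hopen.mem_nhds hm)
      exact h1.comp z₀ (by fun_prop)
    refine hd.congr_of_eventuallyEq ?_
    have hcont : ContinuousAt (fun z : ℂ => z - n) z₀ := by fun_prop
    filter_upwards [hcont.preimage_mem_nhds (hopen.mem_nhds hm)] with z hz
    rw [← hFn n, hFf _ hz.1 hz.2]
  have hFb : ∀ z, ‖F z‖ ≤ C * Real.exp (c * |z.im|) := by
    intro z
    have := hmem z
    have h := hb (z - ⌊z.re - 1 / 2⌋) (by linarith) (by linarith)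
    simpa [hF] using h
  obtain ⟨c₀, c₁, c₂, h⟩ := eq_trigPolynomial_of_growth hFd hFp hc hFb
  exact ⟨c₀, c₁, c₂, fun z h1 h2 => by rw [← hFf z h1 h2, h]⟩

theorem norm_GammaSeq {w : ℂ} {n : ℕ} (hn : n ≠ 0) : ‖Complex.GammaSeq w n‖ =
    (n : ℝ) ^ w.re * n.factorial / ∏ j ∈ Finset.range (n + 1), ‖w + j‖ := by
  rw [Complex.GammaSeq, norm_div, norm_mul, norm_prod, Complex.norm_natCast]
  congr 2
  rw [← Complex.ofReal_natCast, Complex.norm_cpow_eq_rpow_re_of_pos (by positivity)]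

/-- The quotient `Γ(w) / Γ(w + c)` is largest on the real axis. -/
theorem norm_Gamma_div_Gamma_le {w : ℂ} {u c : ℝ} (hu : 0 < u) (huw : u ≤ w.re) (hc : 0 ≤ c) :
    ‖Complex.Gamma w / Complex.Gamma (w + c)‖ ≤ Real.Gamma u / Real.Gamma (u + c) := by
  have hwc : 0 < (w + c).re := by simp; linarith
  have hG : 0 < ‖Complex.Gamma (w + c)‖ := norm_pos_iff.2 (Complex.Gamma_ne_zero_of_re_pos hwc)
  rw [norm_div, div_le_div_iff₀ hG (Real.Gamma_pos_of_pos (by linarith))]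
  have l1 := ((Complex.GammaSeq_tendsto_Gamma w).norm).mul (Real.GammaSeq_tendsto_Gamma (u + c))
  have l2 := (Real.GammaSeq_tendsto_Gamma u).mul (Complex.GammaSeq_tendsto_Gamma (w + c)).norm
  refine le_of_tendsto_of_tendsto l1 l2 ?_
  filter_upwards [eventually_ne_atTop 0] with n hn
  rw [norm_GammaSeq hn, norm_GammaSeq hn, Real.GammaSeq, Real.GammaSeq]
  have hn0 : (0 : ℝ) < n := by positivity
  have hwj : ∀ j : ℕ, u + j ≤ ‖w + j‖ := by
    intro j
    refine le_trans ?_ (Complex.re_le_norm _)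
    simpa using huw
  have hwcj : ∀ j : ℕ, 0 < ‖w + c + j‖ := by
    intro j
    refine lt_of_lt_of_le ?_ (Complex.re_le_norm _)
    simp only [Complex.add_re, Complex.natCast_re, Complex.ofReal_re]
    have : (0:ℝ) ≤ j := j.cast_nonneg
    linarith
  have hprod : ∏ j ∈ Finset.range (n + 1), ((u + j) * ‖w + c + j‖) ≤
      ∏ j ∈ Finset.range (n + 1), (‖w + j‖ * (u + c + j)) := by
    refine Finset.prod_le_prod (fun j _ => by positivity) fun j _ => ?_
    have h1 : ‖w + c + j‖ ≤ ‖w + j‖ + c := by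
      rw [show w + c + (j : ℂ) = (w + j) + c by ring]
      refine (norm_add_le _ _).trans ?_
      rw [Complex.norm_real, Real.norm_of_nonneg hc]
    have h2 := hwj j
    have h3 : (0 : ℝ) ≤ j := j.cast_nonneg
    calc (u + j) * ‖w + c + j‖ ≤ (u + j) * (‖w + j‖ + c) := by gcongr
      _ ≤ _ := by nlinarith
  rw [Finset.prod_mul_distrib, Finset.prod_mul_distrib] at hprod
  have p1 : 0 < ∏ j ∈ Finset.range (n + 1), (u + j) := Finset.prod_pos fun j _ => by positivity
  have p2 : 0 < ∏ j ∈ Finset.range (n + 1), ‖w + c + j‖ := Finset.prod_pos fun j _ => hwcj j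
  have p3 : 0 < ∏ j ∈ Finset.range (n + 1), ‖w + j‖ := Finset.prod_pos fun j _ =>
    lt_of_lt_of_le (by positivity) (hwj j)
  have p4 : 0 < ∏ j ∈ Finset.range (n + 1), (u + c + j) := Finset.prod_pos fun j _ => by positivity
  have e : (n : ℝ) ^ w.re * (n : ℝ) ^ (u + c) = (n : ℝ) ^ u * (n : ℝ) ^ (w + c).re := by
    rw [← Real.rpow_add hn0, ← Real.rpow_add hn0]
    congr 1
    simp
    ring
  rw [div_mul_div_comm, div_mul_div_comm]
  refine div_le_div₀ (by positivity) (le_of_eq ?_) (by positivity) hprod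
  linear_combination (n.factorial : ℝ) ^ 2 * e

/-- The quotient `Γ(z + x) / Γ(z + 1 - x)`. -/
noncomputable def gammaRatio (x : ℝ) (z : ℂ) : ℂ :=
  Complex.Gamma (z + x) / Complex.Gamma (z + 1 - x)

/-- The largest value of the norm of `gammaRatio x` on the half plane `1/4 + k ≤ Re z`. -/
noncomputable def gammaRatioBound (x : ℝ) (k : ℕ) : ℝ :=
  Real.Gamma (1 / 4 + x + k) / Real.Gamma (5 / 4 - x + k)

theorem gammaRatioBound_pos {x : ℝ} (h1 : -1 / 4 < x) (h2 : x < 1 / 4) (k : ℕ) :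
    0 < gammaRatioBound x k := by
  have hk : (0 : ℝ) ≤ k := k.cast_nonneg
  exact div_pos (Real.Gamma_pos_of_pos (by linarith)) (Real.Gamma_pos_of_pos (by linarith))

theorem norm_gammaRatio_add_le {x : ℝ} (h1 : -1 / 4 < x) (h2 : x < 1 / 4) {z : ℂ}
    (hz : 1 / 4 ≤ z.re) (k : ℕ) : ‖gammaRatio x (z + k)‖ ≤ gammaRatioBound x k := by
  have hk : (0 : ℝ) ≤ k := k.cast_nonneg
  have := norm_Gamma_div_Gamma_le (w := z + k + x) (u := 1 / 4 + x + k) (c := 1 - 2 * x)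
    (by linarith) (by simp; linarith) (by linarith)
  rw [gammaRatio, gammaRatioBound]
  convert this using 3
  · congr 1; push_cast; ring
  · ring

theorem gammaRatioBound_sq_le {x : ℝ} (h1 : -1 / 4 < x) (h2 : x < 1 / 4) (k : ℕ) :
    gammaRatioBound x k ^ 2 * (2 * k + 1) ≤ gammaRatioBound x 0 ^ 2 := by
  induction k with
  | zero => simp
  | succ k ih =>
    refine le_trans ?_ ih
    have hk : (0 : ℝ) ≤ k := k.cast_nonneg
    have e : gammaRatioBound x (k + 1) =
        gammaRatioBound x k * ((1 / 4 + x + k) / (5 / 4 - x + k)) := by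
      rw [gammaRatioBound, gammaRatioBound]
      push_cast
      rw [← add_assoc, ← add_assoc, Real.Gamma_add_one (by linarith),
        Real.Gamma_add_one (by linarith), div_mul_div_comm]
      ring
    rw [e, mul_pow, mul_assoc]
    refine mul_le_mul_of_nonneg_left ?_ (by positivity)
    have hp : 0 < 5 / 4 - x + k := by linarith
    rw [div_pow, div_mul_eq_mul_div, div_le_iff₀ (by positivity)]
    push_cast
    have b1 : (1 / 4 + x + k) ^ 2 ≤ (k + 1 / 2) ^ 2 :=
      pow_le_pow_left₀ (by linarith) (by linarith) 2
    have b2 : ((k : ℝ) + 1) ^ 2 ≤ (5 / 4 - x + k) ^ 2 :=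
      pow_le_pow_left₀ (by linarith) (by linarith) 2
    calc (1 / 4 + x + k) ^ 2 * (2 * ((k : ℝ) + 1) + 1) ≤ (k + 1 / 2) ^ 2 * (2 * ((k : ℝ) + 1) + 1) := by
          gcongr
      _ ≤ (2 * k + 1) * ((k : ℝ) + 1) ^ 2 := by nlinarith
      _ ≤ _ := by gcongr

theorem gammaRatioBound_pow_three_le {x : ℝ} (h1 : -1 / 4 < x) (h2 : x < 1 / 4) (k : ℕ) :
    gammaRatioBound x k ^ 3 ≤ gammaRatioBound x 0 ^ 3 * ((k : ℝ) + 1) ^ (-(3 / 2) : ℝ) := by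
  have h := gammaRatioBound_sq_le h1 h2 k
  have p := gammaRatioBound_pos h1 h2 k
  have p0 := gammaRatioBound_pos h1 h2 0
  have hk : (0 : ℝ) ≤ k := k.cast_nonneg
  have h3 : gammaRatioBound x k ^ 2 ≤ gammaRatioBound x 0 ^ 2 * ((k : ℝ) + 1)⁻¹ := by
    rw [← div_eq_mul_inv, le_div_iff₀ (by positivity)]
    nlinarith [sq_nonneg (gammaRatioBound x k)]
  have e : ∀ t : ℝ, 0 ≤ t → (t ^ 2) ^ (3 / 2 : ℝ) = t ^ 3 := by
    intro t ht
    rw [← Real.rpow_natCast t 2, ← Real.rpow_mul ht, ← Real.rpow_natCast]; norm_num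
  calc gammaRatioBound x k ^ 3 = (gammaRatioBound x k ^ 2) ^ (3 / 2 : ℝ) := (e _ p.le).symm
    _ ≤ (gammaRatioBound x 0 ^ 2 * ((k : ℝ) + 1)⁻¹) ^ (3 / 2 : ℝ) := by gcongr
    _ = _ := by
      rw [Real.mul_rpow (by positivity) (by positivity), e _ p0.le,
        Real.inv_rpow (by positivity), Real.rpow_neg (by positivity)]

theorem summable_gammaRatioBound_pow_three {x : ℝ} (h1 : -1 / 4 < x) (h2 : x < 1 / 4) :
    Summable fun k => gammaRatioBound x k ^ 3 :=
  Summable.of_nonneg_of_le (fun k => (pow_pos (gammaRatioBound_pos h1 h2 k) 3).le)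
    (gammaRatioBound_pow_three_le h1 h2) (summable_succ_rpow_neg.mul_left _)

theorem tendsto_gammaRatioBound {x : ℝ} (h1 : -1 / 4 < x) (h2 : x < 1 / 4) :
    Tendsto (gammaRatioBound x) atTop (𝓝 0) := by
  have h := (summable_gammaRatioBound_pow_three h1 h2).tendsto_atTop_zero
  have := h.rpow_const (p := (1 / 3 : ℝ)) (Or.inr (by norm_num))
  rw [Real.zero_rpow (by norm_num)] at this
  refine this.congr fun k => ?_
  rw [← Real.rpow_natCast, ← Real.rpow_mul (gammaRatioBound_pos h1 h2 k).le]
  norm_num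

theorem gammaRatio_add_one {x : ℝ} (h1 : -1 / 4 < x) (h2 : x < 1 / 4) {z : ℂ}
    (hz : 1 / 4 ≤ z.re) : gammaRatio x (z + 1) * (z + 1 - x) = gammaRatio x z * (z + x) := by
  have a1 : z + x ≠ 0 := fun h => by
    have := congrArg Complex.re h; simp at this; linarith
  have a2 : z + 1 - x ≠ 0 := fun h => by
    have := congrArg Complex.re h; simp at this; linarith
  have a3 : Complex.Gamma (z + 1 - x) ≠ 0 := Complex.Gamma_ne_zero_of_re_pos (by simp; linarith)
  rw [gammaRatio, gammaRatio, show z + 1 + (x : ℂ) = z + x + 1 by ring,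
    show z + 1 + 1 - (x : ℂ) = z + 1 - x + 1 by ring, Complex.Gamma_add_one _ a1,
    Complex.Gamma_add_one _ a2]
  field_simp

theorem differentiableOn_gammaRatio {x : ℝ} (h1 : -1 / 4 < x) (h2 : x < 1 / 4) :
    DifferentiableOn ℂ (gammaRatio x) {z | 1 / 4 < z.re} := by
  intro z hz
  have hz : 1 / 4 < z.re := hz
  have hG : ∀ w : ℂ, 0 < w.re → DifferentiableAt ℂ Complex.Gamma w := fun w hw =>
    Complex.differentiableAt_Gamma w fun m h => by
      rw [h] at hw; simp at hw; linarith [(m.cast_nonneg : (0 : ℝ) ≤ m)]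
  refine DifferentiableAt.differentiableWithinAt ?_
  refine DifferentiableAt.div ?_ ?_
    (Complex.Gamma_ne_zero_of_re_pos (by simp; linarith))
  · exact (hG (z + x) (by simp; linarith)).comp z (by fun_prop)
  · exact (hG (z + 1 - x) (by simp; linarith)).comp z (by fun_prop)

theorem tendsto_gammaRatio {ι : Type*} {l : Filter ι} {x : ℝ} (h1 : -1 / 4 < x) (h2 : x < 1 / 4)
    {w : ι → ℂ} (hw : ∀ i, 1 / 4 ≤ (w i).re) (hlim : Tendsto (fun i => |(w i).im|) l atTop) :
    Tendsto (fun i => gammaRatio x (w i)) l (𝓝 0) := by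
  have hre : ∀ (k : ℕ) i, 1 / 4 ≤ (w i + k).re := fun k i => by
    simp only [Complex.add_re, Complex.natCast_re]
    linarith [hw i, (k.cast_nonneg : (0 : ℝ) ≤ k)]
  have tel : ∀ (n : ℕ) i, gammaRatio x (w i) = gammaRatio x (w i + n) +
      ∑ k ∈ Finset.range n, (1 - 2 * x) * gammaRatio x (w i + k) / (w i + k + 1 - x) := by
    intro n i
    induction n with
    | zero => simp
    | succ n ih =>
      rw [Finset.sum_range_succ]
      have a2 : w i + n + 1 - x ≠ 0 := fun h => by
        have := congrArg Complex.re h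
        have := hre n i
        simp at *; linarith
      have h := gammaRatio_add_one h1 h2 (hre n i)
      have h' : gammaRatio x (w i + n) = gammaRatio x (w i + (n + 1 : ℕ)) +
          (1 - 2 * x) * gammaRatio x (w i + n) / (w i + n + 1 - x) := by
        push_cast
        rw [← add_assoc]
        field_simp
        linear_combination -h
      conv_lhs => rw [ih, h']
      ring
  rw [Metric.tendsto_nhds]
  intro ε hε
  obtain ⟨n, hn⟩ := ((tendsto_gammaRatioBound h1 h2).eventually_lt_const (half_pos hε)).exists
  have hsum : Tendsto (fun i => ∑ k ∈ Finset.range n,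
      (1 - 2 * x) * gammaRatio x (w i + k) / (w i + k + 1 - x)) l (𝓝 0) := by
    suffices H : Tendsto (fun i => ∑ k ∈ Finset.range n,
        (1 - 2 * x) * gammaRatio x (w i + k) / (w i + k + 1 - x)) l
        (𝓝 (∑ _k ∈ Finset.range n, (0 : ℂ))) by simpa using H
    refine tendsto_finsetSum _ fun k _ => ?_
    have hb : Tendsto (fun i => ((1 - 2 * x) * gammaRatioBound x k) * |(w i).im|⁻¹) l (𝓝 0) := by
      simpa using hlim.inv_tendsto_atTop.const_mul ((1 - 2 * x) * gammaRatioBound x k)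
    refine squeeze_zero_norm' ?_ hb
    filter_upwards [hlim.eventually_gt_atTop 0] with i hi
    rw [norm_div, norm_mul, div_eq_mul_inv]
    have e1 : ‖(1 - 2 * x : ℂ)‖ = 1 - 2 * x := by
      rw [show (1 - 2 * x : ℂ) = ((1 - 2 * x : ℝ) : ℂ) by push_cast; ring, Complex.norm_real,
        Real.norm_of_nonneg (by linarith)]
    have e2 : |(w i).im| ≤ ‖w i + k + 1 - x‖ := by
      have := Complex.abs_im_le_norm (w i + k + 1 - x)
      simpa using this
    rw [e1]
    have : 0 ≤ 1 - 2 * x := by linarith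
    exact mul_le_mul (mul_le_mul_of_nonneg_left (norm_gammaRatio_add_le h1 h2 (hw i) k) this)
      (inv_anti₀ hi e2) (by positivity) (mul_nonneg this (gammaRatioBound_pos h1 h2 k).le)
  filter_upwards [(Metric.tendsto_nhds.1 hsum) (ε / 2) (half_pos hε)] with i hi
  rw [dist_zero_right] at hi ⊢
  rw [tel n i]
  calc _ ≤ _ := norm_add_le _ _
    _ < ε / 2 + ε / 2 := add_lt_add (lt_of_le_of_lt (norm_gammaRatio_add_le h1 h2 (hw i) n) hn) hi
    _ = ε := by ring

/-- The sum of the cubes of `gammaRatio x` over `z + ℕ`. -/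
noncomputable def gammaRatioSum (x : ℝ) (z : ℂ) : ℂ := ∑' k : ℕ, gammaRatio x (z + k) ^ 3

theorem norm_gammaRatio_pow_le {x : ℝ} (h1 : -1 / 4 < x) (h2 : x < 1 / 4) {z : ℂ}
    (hz : 1 / 4 ≤ z.re) (k : ℕ) : ‖gammaRatio x (z + k) ^ 3‖ ≤ gammaRatioBound x k ^ 3 := by
  rw [norm_pow]
  have := norm_gammaRatio_add_le h1 h2 hz k
  gcongr

theorem summable_gammaRatio_pow {x : ℝ} (h1 : -1 / 4 < x) (h2 : x < 1 / 4) {z : ℂ}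
    (hz : 1 / 4 ≤ z.re) : Summable fun k : ℕ => gammaRatio x (z + k) ^ 3 :=
  Summable.of_norm_bounded (summable_gammaRatioBound_pow_three h1 h2)
    (norm_gammaRatio_pow_le h1 h2 hz)

theorem gammaRatioSum_eq_add {x : ℝ} (h1 : -1 / 4 < x) (h2 : x < 1 / 4) {z : ℂ}
    (hz : 1 / 4 ≤ z.re) : gammaRatioSum x z = gammaRatio x z ^ 3 + gammaRatioSum x (z + 1) := by
  rw [gammaRatioSum, (summable_gammaRatio_pow h1 h2 hz).tsum_eq_zero_add, gammaRatioSum]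
  simp only [Nat.cast_zero, add_zero, Nat.cast_add, Nat.cast_one]
  congr 2
  ext k
  congr 2
  ring

theorem norm_gammaRatioSum_le {x : ℝ} (h1 : -1 / 4 < x) (h2 : x < 1 / 4) {z : ℂ}
    (hz : 1 / 4 ≤ z.re) : ‖gammaRatioSum x z‖ ≤ ∑' k, gammaRatioBound x k ^ 3 :=
  tsum_of_norm_bounded (summable_gammaRatioBound_pow_three h1 h2).hasSum
    (norm_gammaRatio_pow_le h1 h2 hz)

theorem tendsto_gammaRatioSum {ι : Type*} {l : Filter ι} {x : ℝ} (h1 : -1 / 4 < x)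
    (h2 : x < 1 / 4) {w : ι → ℂ} (hw : ∀ i, 1 / 4 ≤ (w i).re)
    (hlim : Tendsto (fun i => |(w i).im|) l atTop) :
    Tendsto (fun i => gammaRatioSum x (w i)) l (𝓝 0) := by
  rw [← tsum_zero (β := ℕ)]
  refine tendsto_tsum_of_dominated_convergence (summable_gammaRatioBound_pow_three h1 h2) ?_
    (Eventually.of_forall fun i k => norm_gammaRatio_pow_le h1 h2 (hw i) k)
  intro k
  have := (tendsto_gammaRatio (l := l) h1 h2 (w := fun i => w i + k) (fun i => by
    simp only [Complex.add_re, Complex.natCast_re]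
    linarith [hw i, (k.cast_nonneg : (0 : ℝ) ≤ k)]) (by simpa using hlim)).pow 3
  simpa using this

theorem isOpen_re_gt (a : ℝ) : IsOpen {z : ℂ | a < z.re} :=
  isOpen_lt continuous_const Complex.continuous_re

theorem differentiableOn_gammaRatioSum {x : ℝ} (h1 : -1 / 4 < x) (h2 : x < 1 / 4) :
    DifferentiableOn ℂ (gammaRatioSum x) {z | 1 / 4 < z.re} := by
  refine Complex.differentiableOn_tsum_of_summable_norm
    (summable_gammaRatioBound_pow_three h1 h2) (fun k => ?_) (isOpen_re_gt _)
    fun k z hz => norm_gammaRatio_pow_le h1 h2 (le_of_lt hz) k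
  refine DifferentiableOn.pow ((differentiableOn_gammaRatio h1 h2).comp (by fun_prop) ?_) 3
  intro z hz
  have hz : 1 / 4 < z.re := hz
  simp only [Set.mem_ofPred_eq, Complex.add_re, Complex.natCast_re]
  linarith [(k.cast_nonneg : (0 : ℝ) ≤ k)]

/-- Partial products of the Euler product of `sinh` grow at most exponentially. -/
theorem prod_one_add_sq_div_le {v : ℝ} (hv : 0 ≤ v) (n : ℕ) :
    ∏ m ∈ Finset.range n, (1 + v ^ 2 / ((m : ℝ) + 1) ^ 2) ≤ Real.exp (Real.pi * v) := by
  rcases hv.eq_or_lt with rfl | hv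
  · simp
  have hpv : 0 < Real.pi * v := mul_pos Real.pi_pos hv
  have hmono : Monotone fun n : ℕ =>
      Real.pi * v * ∏ m ∈ Finset.range n, (1 + v ^ 2 / ((m : ℝ) + 1) ^ 2) := by
    refine monotone_nat_of_le_succ fun n => ?_
    rw [Finset.prod_range_succ]
    have h0 : 0 ≤ ∏ m ∈ Finset.range n, (1 + v ^ 2 / ((m : ℝ) + 1) ^ 2) :=
      Finset.prod_nonneg fun m _ => by positivity
    have h1 : 0 ≤ v ^ 2 / ((n : ℝ) + 1) ^ 2 := by positivity
    nlinarith [mul_nonneg (mul_nonneg hpv.le h0) h1]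
  have hlim : Tendsto (fun n : ℕ =>
      Real.pi * v * ∏ m ∈ Finset.range n, (1 + v ^ 2 / ((m : ℝ) + 1) ^ 2)) atTop
      (𝓝 (Real.sinh (Real.pi * v))) := by
    have h := ((Complex.tendsto_euler_sin_prod (v * Complex.I)).mul_const (-Complex.I))
    have h2 := (Complex.continuous_re.tendsto _).comp h
    have e : (Complex.sin (Real.pi * (v * Complex.I)) * -Complex.I).re =
        Real.sinh (Real.pi * v) := by
      rw [← mul_assoc, Complex.sin_mul_I, mul_assoc, mul_neg, Complex.I_mul_I, neg_neg, mul_one,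
        ← Complex.ofReal_mul, ← Complex.ofReal_sinh, Complex.ofReal_re]
    rw [e] at h2
    refine h2.congr fun n => ?_
    simp only [Function.comp]
    rw [← Complex.ofReal_re (Real.pi * v * _)]
    congr 1
    push_cast
    have : ∀ m : ℕ, (1 : ℂ) - (v * Complex.I) ^ 2 / (m + 1) ^ 2 = 1 + v ^ 2 / (m + 1) ^ 2 := by
      intro m
      rw [mul_pow, Complex.I_sq]; ring
    simp only [this]
    linear_combination (-(Real.pi : ℂ) * v *
      ∏ m ∈ Finset.range n, ((1 : ℂ) + v ^ 2 / (m + 1) ^ 2)) * Complex.I_mul_I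
  have hle := hmono.ge_of_tendsto hlim n
  have hs : Real.sinh (Real.pi * v) ≤ Real.pi * v * Real.exp (Real.pi * v) := by
    rw [Real.sinh_eq]
    have h1 := Real.add_one_le_exp (-(2 * (Real.pi * v)))
    have h2 : Real.exp (-(Real.pi * v)) =
        Real.exp (Real.pi * v) * Real.exp (-(2 * (Real.pi * v))) := by
      rw [← Real.exp_add]; congr 1; ring
    rw [h2]
    nlinarith [Real.exp_pos (Real.pi * v)]
  exact le_of_mul_le_mul_left (hle.trans hs) hpv

/-- The hypergeometric coefficient of the series, with index shifted by `x`. -/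
noncomputable def wzCoeff (x : ℝ) (n : ℕ) : ℝ :=
  (3 / 4 : ℝ) ^ ((3 : ℝ) * ((n : ℝ) + x)) *
    (pochG (1 / 2) ((n : ℝ) + x) ^ 3 * pochG (1 / 3) ((n : ℝ) + x) *
      pochG (2 / 3) ((n : ℝ) + x) / pochG 1 ((n : ℝ) + x) ^ 5)

theorem pochG_pos {a t : ℝ} (ha : 0 < a) (hat : 0 < a + t) : 0 < pochG a t :=
  div_pos (Real.Gamma_pos_of_pos hat) (Real.Gamma_pos_of_pos ha)

theorem pochG_add_one {a t : ℝ} (h : a + t ≠ 0) : pochG a (t + 1) = (a + t) * pochG a t := by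
  rw [pochG, pochG, ← add_assoc, Real.Gamma_add_one h]
  ring

theorem wzCoeff_pos {x : ℝ} (h1 : -1 / 4 < x) (n : ℕ) : 0 < wzCoeff x n := by
  have hn : (0 : ℝ) ≤ n := n.cast_nonneg
  have a1 : 0 < pochG (1 / 2) ((n : ℝ) + x) := pochG_pos (by norm_num) (by linarith)
  have a2 : 0 < pochG (1 / 3) ((n : ℝ) + x) := pochG_pos (by norm_num) (by linarith)
  have a3 : 0 < pochG (2 / 3) ((n : ℝ) + x) := pochG_pos (by norm_num) (by linarith)
  have a4 : 0 < pochG 1 ((n : ℝ) + x) := pochG_pos (by norm_num) (by linarith)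
  unfold wzCoeff
  positivity

theorem wzCoeff_succ {x : ℝ} (h1 : -1 / 4 < x) (n : ℕ) :
    wzCoeff x (n + 1) * (64 * (n + x + 1) ^ 5) =
      wzCoeff x n * (27 * (n + x + 1 / 2) ^ 3 * (n + x + 1 / 3) * (n + x + 2 / 3)) := by
  have hn : (0 : ℝ) ≤ n := n.cast_nonneg
  have a4 : 0 < pochG 1 ((n : ℝ) + x) := pochG_pos (by norm_num) (by linarith)
  have e : ((n + 1 : ℕ) : ℝ) + x = n + x + 1 := by push_cast; ring
  have hp : (0 : ℝ) < 1 + (n + x) := by linarith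
  rw [wzCoeff, wzCoeff, e, pochG_add_one (by linarith), pochG_add_one (by linarith),
    pochG_add_one (by linarith), pochG_add_one (by linarith),
    show (3 : ℝ) * (n + x + 1) = 3 * (n + x) + (3 : ℕ) by push_cast; ring,
    Real.rpow_add_natCast (by norm_num)]
  field_simp
  ring

theorem wzCoeff_le {x : ℝ} (h1 : -1 / 4 < x) (n : ℕ) :
    wzCoeff x n ≤ wzCoeff x 0 * (27 / 64) ^ n := by
  induction n with
  | zero => simp
  | succ n ih =>
    have hn : (0 : ℝ) ≤ n := n.cast_nonneg
    have hN : (0 : ℝ) < n + x + 1 / 3 := by linarith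
    have hs := wzCoeff_succ h1 n
    have hb : (n + x + 1 / 2) ^ 3 * (n + x + 1 / 3) * (n + x + 2 / 3) ≤ (n + x + 1) ^ 5 := by
      have : (n + x + 1) ^ 5 = (n + x + 1) ^ 3 * (n + x + 1) * (n + x + 1) := by ring
      rw [this]
      gcongr <;> first
        | linarith
        | exact pow_nonneg (by linarith) _
        | exact mul_nonneg (pow_nonneg (by linarith) _) (by linarith)
    have hp : 0 < (n + x + 1) ^ 5 := pow_pos (by linarith) 5
    have hc := wzCoeff_pos h1 n
    have : wzCoeff x (n + 1) ≤ wzCoeff x n * (27 / 64) := by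
      have h2 : wzCoeff x (n + 1) * (64 * (n + x + 1) ^ 5) ≤
          wzCoeff x n * (27 / 64) * (64 * (n + x + 1) ^ 5) := by
        rw [hs]; nlinarith [mul_le_mul_of_nonneg_left hb hc.le]
      exact le_of_mul_le_mul_right h2 (by positivity)
    rw [pow_succ]
    linarith

/-- The bound for the products occurring in the Wilf-Zeilberger pair. -/
theorem wzCoeff_mul_norm_prod_le {x : ℝ} (h1 : -1 / 4 < x) {y : ℝ} {a : ℕ → ℂ}
    (ha : ∀ m : ℕ, ‖a m‖ ≤ ((m + 9 / 4) ^ 2 + y ^ 2) / ((m : ℝ) + 1 / 4) ^ 2) (n : ℕ) :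
    wzCoeff x n * ‖∏ m ∈ Finset.range n, a m‖ ^ 3 ≤
      wzCoeff x 0 * (4096 * (n + 2) ^ 12 * (729 / 1000) ^ n) *
        Real.exp (69 / 25 * Real.pi * |y|) := by
  have htel : ∀ n : ℕ, ∏ m ∈ Finset.range n, (((m : ℝ) + 9 / 4) / (m + 1 / 4)) =
      16 / 5 * (n + 1 / 4) * (n + 5 / 4) := by
    intro n
    induction n with
    | zero => norm_num
    | succ n ih =>
      rw [Finset.prod_range_succ, ih]
      push_cast
      field_simp
      ring
  have hprod : (3 / 4) ^ n * ‖∏ m ∈ Finset.range n, a m‖ ≤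
      16 * (n + 2) ^ 4 * (9 / 10) ^ n * Real.exp (23 / 25 * Real.pi * |y|) := by
    have hstep : ∀ m ∈ Finset.range n, 3 / 4 * ‖a m‖ ≤
        (((m : ℝ) + 9 / 4) / (m + 1 / 4)) ^ 2 *
          (9 / 10 * (1 + (23 / 25 * |y|) ^ 2 / ((m : ℝ) + 1) ^ 2)) := by
      intro m _
      have hm : (0 : ℝ) ≤ m := m.cast_nonneg
      have e : ((m + 9 / 4) ^ 2 + y ^ 2) / ((m : ℝ) + 1 / 4) ^ 2 =
          (((m : ℝ) + 9 / 4) / (m + 1 / 4)) ^ 2 * (1 + y ^ 2 / (m + 9 / 4) ^ 2) := by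
        field_simp
      have h2 : y ^ 2 / ((m : ℝ) + 9 / 4) ^ 2 ≤ y ^ 2 / ((m : ℝ) + 1) ^ 2 := by
        gcongr; norm_num
      have h3 : 0 ≤ y ^ 2 / ((m : ℝ) + 1) ^ 2 := by positivity
      calc 3 / 4 * ‖a m‖ ≤ (((m : ℝ) + 9 / 4) / (m + 1 / 4)) ^ 2 *
            (3 / 4 * (1 + y ^ 2 / (m + 9 / 4) ^ 2)) := by
              have := ha m
              rw [e] at this
              linarith
        _ ≤ _ := by
              refine mul_le_mul_of_nonneg_left ?_ (by positivity)
              rw [mul_pow, sq_abs, mul_div_assoc]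
              nlinarith
    have h := Finset.prod_le_prod (fun m _ => by positivity) hstep
    rw [Finset.prod_mul_distrib, Finset.prod_mul_distrib, Finset.prod_mul_distrib,
      Finset.prod_const, Finset.prod_const, Finset.card_range, Finset.prod_pow, htel,
      ← norm_prod] at h
    refine h.trans ?_
    have hn : (0 : ℝ) ≤ n := n.cast_nonneg
    have hq : (16 / 5 * ((n : ℝ) + 1 / 4) * (n + 5 / 4)) ^ 2 ≤ 16 * (n + 2) ^ 4 := by
      have : 16 / 5 * ((n : ℝ) + 1 / 4) * (n + 5 / 4) ≤ 4 * (n + 2) ^ 2 := by nlinarith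
      calc _ ≤ (4 * ((n : ℝ) + 2) ^ 2) ^ 2 := by gcongr
        _ = _ := by ring
    have hE := prod_one_add_sq_div_le (v := 23 / 25 * |y|) (by positivity) n
    rw [show Real.pi * (23 / 25 * |y|) = 23 / 25 * Real.pi * |y| by ring] at hE
    calc _ ≤ 16 * ((n : ℝ) + 2) ^ 4 * ((9 / 10) ^ n * Real.exp (23 / 25 * Real.pi * |y|)) := by
          gcongr
      _ = _ := by ring
  have hc := wzCoeff_pos h1 0
  calc wzCoeff x n * ‖∏ m ∈ Finset.range n, a m‖ ^ 3
      ≤ wzCoeff x 0 * (27 / 64) ^ n * ‖∏ m ∈ Finset.range n, a m‖ ^ 3 := by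
        gcongr; exact wzCoeff_le h1 n
    _ = wzCoeff x 0 * ((3 / 4) ^ n * ‖∏ m ∈ Finset.range n, a m‖) ^ 3 := by
        rw [mul_pow, ← pow_mul, mul_comm n 3, pow_mul]; norm_num; ring
    _ ≤ wzCoeff x 0 *
        (16 * (n + 2) ^ 4 * (9 / 10) ^ n * Real.exp (23 / 25 * Real.pi * |y|)) ^ 3 := by gcongr
    _ = _ := by
        rw [mul_pow, mul_pow, mul_pow, ← pow_mul, ← pow_mul, ← Real.exp_nat_mul, mul_comm n 3,
          pow_mul (9 / 10 : ℝ)]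
        norm_num
        ring_nf

theorem summable_add_pow_mul_geometric (k : ℕ) :
    Summable fun n : ℕ => ((n : ℝ) + 2) ^ k * (729 / 1000) ^ n := by
  have h := summable_pow_mul_geometric_of_norm_lt_one k (r := (729 / 1000 : ℝ)) (by norm_num)
  have h2 := ((summable_nat_add_iff 2).2 h).mul_right ((729 / 1000 : ℝ)⁻¹ ^ 2)
  refine h2.congr fun n => ?_
  push_cast
  rw [pow_add]
  field_simp

/-- The polynomial factor of the summand. -/
noncomputable def wzPoly (N : ℝ) (z : ℂ) : ℂ :=
  (3 * N + 1) / (2 * N + 1) ^ 3 * (z - 1 / 2) ^ 4 -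
    (5 * N + 1) / (2 * (2 * N + 1)) * (z - 1 / 2) ^ 2 + (74 * N ^ 2 + 27 * N + 3) / 48

/-- The summand of the Wilf-Zeilberger pair. -/
noncomputable def wzTerm (x : ℝ) (n : ℕ) (z : ℂ) : ℂ :=
  wzCoeff x n * (∏ m ∈ Finset.range n, ((z + x + m) * (1 - z + x + m) / (1 / 2 + x + m) ^ 2)) ^ 3 *
    wzPoly (n + x) z

theorem wzPoly_one_sub (N : ℝ) (z : ℂ) : wzPoly N (1 - z) = wzPoly N z := by
  unfold wzPoly
  ring

theorem wzTerm_one_sub (x : ℝ) (n : ℕ) (z : ℂ) : wzTerm x n (1 - z) = wzTerm x n z := by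
  unfold wzTerm
  rw [wzPoly_one_sub]
  congr 3
  refine Finset.prod_congr rfl fun m _ => ?_
  ring

theorem norm_wzPoly_le {x : ℝ} (h1 : -1 / 4 < x) (h2 : x < 1 / 4) (n : ℕ) {z : ℂ}
    (hz1 : 1 / 4 < z.re) (hz2 : z.re < 2) :
    ‖wzPoly (n + x) z‖ ≤ 32 * (n + 2) ^ 2 * (9 / 4 + z.im ^ 2) ^ 2 := by
  have hn : (0 : ℝ) ≤ n := n.cast_nonneg
  obtain ⟨N, hN⟩ : ∃ N : ℝ, N = n + x := ⟨_, rfl⟩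
  have N1 : -1 / 4 < N := by linarith
  have N2 : N < n + 1 := by linarith
  rw [← hN]
  have hw : ‖z - 1 / 2‖ ^ 2 ≤ 9 / 4 + z.im ^ 2 := by
    rw [← Complex.normSq_eq_norm_sq, Complex.normSq_apply]
    simp only [Complex.sub_re, Complex.sub_im]
    norm_num
    nlinarith
  set W := 9 / 4 + z.im ^ 2 with hW
  have hW1 : 1 ≤ W := by nlinarith [sq_nonneg z.im]
  have hd : 1 / 2 ≤ 2 * N + 1 := by linarith
  have c1 : |(3 * N + 1) / (2 * N + 1) ^ 3| ≤ 24 * ((n : ℝ) + 2) := by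
    have hd3 : 1 / 8 ≤ (2 * N + 1) ^ 3 := by
      calc (1 / 8 : ℝ) = (1 / 2) ^ 3 := by norm_num
        _ ≤ _ := by gcongr
    rw [abs_of_pos (div_pos (by linarith) (by linarith)), div_le_iff₀ (by linarith)]
    nlinarith
  have c2 : |(5 * N + 1) / (2 * (2 * N + 1))| ≤ 5 * ((n : ℝ) + 2) := by
    rw [abs_div, abs_of_pos (by linarith : 0 < 2 * (2 * N + 1)), div_le_iff₀ (by linarith)]
    have : |5 * N + 1| ≤ 5 * ((n : ℝ) + 2) := abs_le.2 ⟨by linarith, by linarith⟩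
    nlinarith
  have c3 : |(74 * N ^ 2 + 27 * N + 3) / 48| ≤ 3 * ((n : ℝ) + 2) ^ 2 := by
    have : N ^ 2 ≤ (n + 1) ^ 2 := by apply sq_le_sq'; all_goals linarith
    rw [abs_le]
    constructor <;> nlinarith
  have e : wzPoly N z = ((3 * N + 1) / (2 * N + 1) ^ 3 : ℝ) * (z - 1 / 2) ^ 4 -
      ((5 * N + 1) / (2 * (2 * N + 1)) : ℝ) * (z - 1 / 2) ^ 2 +
      ((74 * N ^ 2 + 27 * N + 3) / 48 : ℝ) := by
    rw [wzPoly]; push_cast; ring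
  have hw4 : ‖z - 1 / 2‖ ^ 4 ≤ W ^ 2 := by
    calc ‖z - 1 / 2‖ ^ 4 = (‖z - 1 / 2‖ ^ 2) ^ 2 := by ring
      _ ≤ _ := by gcongr
  have hWW : W ≤ W ^ 2 := by nlinarith
  rw [e]
  calc _ ≤ ‖(((3 * N + 1) / (2 * N + 1) ^ 3 : ℝ) : ℂ) * (z - 1 / 2) ^ 4‖ +
        ‖(((5 * N + 1) / (2 * (2 * N + 1)) : ℝ) : ℂ) * (z - 1 / 2) ^ 2‖ +
        ‖(((74 * N ^ 2 + 27 * N + 3) / 48 : ℝ) : ℂ)‖ :=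
        (norm_add_le _ _).trans (add_le_add_left (norm_sub_le _ _) _)
    _ = |(3 * N + 1) / (2 * N + 1) ^ 3| * ‖z - 1 / 2‖ ^ 4 +
        |(5 * N + 1) / (2 * (2 * N + 1))| * ‖z - 1 / 2‖ ^ 2 +
        |(74 * N ^ 2 + 27 * N + 3) / 48| := by
        rw [norm_mul, norm_mul, norm_pow, norm_pow, Complex.norm_real, Complex.norm_real,
          Complex.norm_real]
        simp only [Real.norm_eq_abs]
    _ ≤ 24 * (n + 2) * W ^ 2 + 5 * (n + 2) * W + 3 * (n + 2) ^ 2 := by gcongr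
    _ ≤ 24 * (n + 2) ^ 2 * W ^ 2 + 5 * (n + 2) ^ 2 * W ^ 2 + 3 * (n + 2) ^ 2 * W ^ 2 := by
        have i1 : ((n : ℝ) + 2) ≤ (n + 2) ^ 2 := by nlinarith
        have i2 : 3 * ((n : ℝ) + 2) ^ 2 ≤ 3 * (n + 2) ^ 2 * W ^ 2 :=
          le_mul_of_one_le_right (by positivity) (by linarith)
        have i3 : 5 * ((n : ℝ) + 2) * W ≤ 5 * (n + 2) ^ 2 * W ^ 2 := by gcongr
        have i4 : 24 * ((n : ℝ) + 2) * W ^ 2 ≤ 24 * (n + 2) ^ 2 * W ^ 2 := by gcongr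
        linarith
    _ = _ := by ring

theorem norm_mul_div_sq_le {x : ℝ} (h1 : -1 / 4 < x) {m : ℕ} {u v : ℂ} {y : ℝ}
    (hu : |u.re| ≤ m + 9 / 4) (hv : |v.re| ≤ m + 9 / 4) (hu' : u.im ^ 2 = y ^ 2)
    (hv' : v.im ^ 2 = y ^ 2) :
    ‖u * v / (1 / 2 + x + m) ^ 2‖ ≤ ((m + 9 / 4) ^ 2 + y ^ 2) / ((m : ℝ) + 1 / 4) ^ 2 := by
  have hm : (0 : ℝ) ≤ m := m.cast_nonneg
  have key : ∀ w : ℂ, |w.re| ≤ m + 9 / 4 → w.im ^ 2 = y ^ 2 →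
      ‖w‖ ≤ √((m + 9 / 4) ^ 2 + y ^ 2) := by
    intro w hw hw'
    apply Real.le_sqrt_of_sq_le
    rw [← Complex.normSq_eq_norm_sq, Complex.normSq_apply]
    have := sq_le_sq' (by linarith [abs_le.1 hw]) (abs_le.1 hw).2
    nlinarith
  have hd : ‖(1 / 2 + x + m : ℂ)‖ = 1 / 2 + x + m := by
    rw [show (1 / 2 + x + m : ℂ) = ((1 / 2 + x + m : ℝ) : ℂ) by push_cast; ring,
      Complex.norm_real, Real.norm_of_nonneg (by linarith)]
  rw [norm_div, norm_mul, norm_pow, hd]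
  have hnum : ‖u‖ * ‖v‖ ≤ (m + 9 / 4) ^ 2 + y ^ 2 := by
    calc ‖u‖ * ‖v‖ ≤ √((m + 9 / 4) ^ 2 + y ^ 2) * √((m + 9 / 4) ^ 2 + y ^ 2) := by
          gcongr
          · exact key u hu hu'
          · exact key v hv hv'
      _ = _ := Real.mul_self_sqrt (by positivity)
  refine div_le_div₀ (by positivity) hnum (by positivity) (pow_le_pow_left₀ (by linarith) ?_ 2)
  linarith

theorem nine_fourths_add_sq_le (y : ℝ) : 9 / 4 + y ^ 2 ≤ 100 * Real.exp (|y| / 5) := by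
  have h := Real.add_one_le_exp (|y| / 10)
  have e : Real.exp (|y| / 5) = Real.exp (|y| / 10) ^ 2 := by
    rw [← Real.exp_nat_mul]; congr 1; push_cast; ring
  have h0 := abs_nonneg y
  rw [e, ← sq_abs y]
  nlinarith [Real.exp_pos (|y| / 10)]

theorem norm_wzTerm_le {x : ℝ} (h1 : -1 / 4 < x) (h2 : x < 1 / 4) (n : ℕ) {z : ℂ}
    (hz1 : 1 / 4 < z.re) (hz2 : z.re < 2) :
    ‖wzTerm x n z‖ ≤ wzCoeff x 0 * 1310720000 * ((n + 2) ^ 14 * (729 / 1000) ^ n) *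
      Real.exp ((69 / 25 * Real.pi + 2 / 5) * |z.im|) := by
  have hP := wzCoeff_mul_norm_prod_le h1 (y := z.im)
    (a := fun m : ℕ => (z + x + m) * (1 - z + x + m) / (1 / 2 + x + m) ^ 2) (fun m => by
      have hm : (0 : ℝ) ≤ m := m.cast_nonneg
      apply norm_mul_div_sq_le h1
      · simp only [Complex.add_re, Complex.natCast_re, Complex.ofReal_re]
        rw [abs_le]; constructor <;> linarith
      · simp only [Complex.add_re, Complex.natCast_re, Complex.ofReal_re, Complex.sub_re,
          Complex.one_re]
        rw [abs_le]; constructor <;> linarith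
      · simp
      · simp) n
  have hQ := norm_wzPoly_le h1 h2 n hz1 hz2
  have hc := wzCoeff_pos h1 n
  have hc0 := wzCoeff_pos h1 0
  have hE := nine_fourths_add_sq_le z.im
  have hE2 : (9 / 4 + z.im ^ 2) ^ 2 ≤ 10000 * Real.exp (2 / 5 * |z.im|) := by
    calc (9 / 4 + z.im ^ 2) ^ 2 ≤ (100 * Real.exp (|z.im| / 5)) ^ 2 := by gcongr
      _ = _ := by rw [mul_pow, ← Real.exp_nat_mul]; norm_num; ring_nf
  rw [wzTerm, norm_mul, norm_mul, norm_pow, Complex.norm_real, Real.norm_of_nonneg hc.le]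
  calc _ ≤ wzCoeff x 0 * (4096 * (n + 2) ^ 12 * (729 / 1000) ^ n) *
        Real.exp (69 / 25 * Real.pi * |z.im|) *
        (32 * (n + 2) ^ 2 * (10000 * Real.exp (2 / 5 * |z.im|))) := by
        refine mul_le_mul hP (hQ.trans ?_) (norm_nonneg _) (by positivity)
        gcongr
    _ = _ := by rw [add_mul, Real.exp_add]; ring

theorem summable_wzTerm {x : ℝ} (h1 : -1 / 4 < x) (h2 : x < 1 / 4) {z : ℂ}
    (hz1 : 1 / 4 < z.re) (hz2 : z.re < 2) : Summable fun n => wzTerm x n z :=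
  Summable.of_norm_bounded (((summable_add_pow_mul_geometric 14).mul_left _).mul_right _)
    fun n => norm_wzTerm_le h1 h2 n hz1 hz2

/-- The generating function of `wzTerm`. -/
noncomputable def wzSum (x : ℝ) (z : ℂ) : ℂ := ∑' n, wzTerm x n z

theorem wzSum_one_sub (x : ℝ) (z : ℂ) : wzSum x (1 - z) = wzSum x z := by
  simp only [wzSum, wzTerm_one_sub]

theorem exists_norm_wzSum_le {x : ℝ} (h1 : -1 / 4 < x) (h2 : x < 1 / 4) :
    ∃ C, ∀ z : ℂ, 1 / 4 < z.re → z.re < 2 →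
      ‖wzSum x z‖ ≤ C * Real.exp ((69 / 25 * Real.pi + 2 / 5) * |z.im|) :=
  ⟨_, fun _ hz1 hz2 => tsum_of_norm_bounded
    (((summable_add_pow_mul_geometric 14).mul_left _).hasSum.mul_right _)
    fun n => norm_wzTerm_le h1 h2 n hz1 hz2⟩

theorem differentiable_wzTerm (x : ℝ) (n : ℕ) : Differentiable ℂ (wzTerm x n) := by
  unfold wzTerm wzPoly
  fun_prop

theorem differentiableOn_wzSum {x : ℝ} (h1 : -1 / 4 < x) (h2 : x < 1 / 4) :
    DifferentiableOn ℂ (wzSum x) {z | 1 / 4 < z.re ∧ z.re < 2} := by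
  intro z hz
  have ho : IsOpen {w : ℂ | (1 / 4 < w.re ∧ w.re < 2) ∧ |w.im| < |z.im| + 1} := by
    refine ((isOpen_re_gt _).inter (isOpen_lt Complex.continuous_re continuous_const)).inter
      (isOpen_lt (continuous_abs.comp Complex.continuous_im) continuous_const)
  have hd : DifferentiableOn ℂ (wzSum x)
      {w : ℂ | (1 / 4 < w.re ∧ w.re < 2) ∧ |w.im| < |z.im| + 1} := by
    refine Complex.differentiableOn_tsum_of_summable_norm
      (((summable_add_pow_mul_geometric 14).mul_left (wzCoeff x 0 * 1310720000)).mul_right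
        (Real.exp ((69 / 25 * Real.pi + 2 / 5) * (|z.im| + 1))))
      (fun n => (differentiable_wzTerm x n).differentiableOn) ho fun n w hw => ?_
    refine (norm_wzTerm_le h1 h2 n hw.1.1 hw.1.2).trans ?_
    have hc0 := wzCoeff_pos h1 0
    have := hw.2.le
    have := Real.pi_pos
    gcongr
  exact (hd.differentiableAt (ho.mem_nhds ⟨hz, by linarith⟩)).differentiableWithinAt

/-- The combination of `wzSum` and `gammaRatioSum` that turns out to be periodic. -/
noncomputable def wzFun (x : ℝ) (z : ℂ) : ℂ :=
  (z - x) ^ 3 * gammaRatio x z ^ 3 * wzSum x z +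
    16 / 3 * x ^ 5 * wzCoeff x 0 * gammaRatioSum x z

/-- The Wilf-Zeilberger identity for `wzPoly`. -/
theorem wzPoly_add_one {N : ℝ} (hN : 0 < 2 * N + 1) (z : ℂ) :
    (z + N) ^ 3 * wzPoly N (z + 1) - (z - N) ^ 3 * wzPoly N z =
      9 / 4 * (N + 1 / 3) * (N + 2 / 3) * (z ^ 2 - N ^ 2) ^ 3 / (N + 1 / 2) ^ 3 +
        16 / 3 * N ^ 5 := by
  have h : (2 * N + 1 : ℂ) ≠ 0 := by exact_mod_cast hN.ne'
  obtain ⟨D, hD⟩ : ∃ D : ℂ, D = 2 * N + 1 := ⟨_, rfl⟩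
  have hN : (N : ℂ) = (D - 1) / 2 := by rw [hD]; ring
  have hhalf : (N + 1 / 2 : ℂ) = D / 2 := by rw [hD]; ring
  rw [hhalf, wzPoly, wzPoly, ← hD, hN]
  rw [← hD] at h
  field_simp
  ring

/-- The companion product of the Wilf-Zeilberger pair. -/
noncomputable def wzProd (x : ℝ) (n : ℕ) (z : ℂ) : ℂ :=
  ∏ m ∈ Finset.range n, ((z + x + m) * (x + m - z) / (1 / 2 + x + m) ^ 2)

theorem prod_mul_sub (x : ℝ) (n : ℕ) (z : ℂ) :
    (∏ m ∈ Finset.range n, ((z + x + m) * (1 - z + x + m) / (1 / 2 + x + m : ℂ) ^ 2)) * (z - x) =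
      wzProd x n z * (z - (n + x)) := by
  induction n with
  | zero => simp [wzProd]
  | succ n ih =>
    rw [wzProd, Finset.prod_range_succ, Finset.prod_range_succ, ← wzProd, mul_right_comm, ih]
    push_cast
    ring

theorem prod_add_one_mul_add (x : ℝ) (n : ℕ) (z : ℂ) :
    (∏ m ∈ Finset.range n,
      ((z + 1 + x + m) * (1 - (z + 1) + x + m) / (1 / 2 + x + m : ℂ) ^ 2)) * (z + x) =
      wzProd x n z * (z + (n + x)) := by
  induction n with
  | zero => simp [wzProd]
  | succ n ih =>
    rw [wzProd, Finset.prod_range_succ, Finset.prod_range_succ, ← wzProd, mul_right_comm, ih]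
    push_cast
    ring

/-- The telescoping companion of `wzTerm`. -/
noncomputable def wzCompanion (x : ℝ) (n : ℕ) (z : ℂ) : ℂ :=
  16 / 3 * (n + x) ^ 5 * (wzCoeff x n * wzProd x n z ^ 3)

theorem summable_wzCompanion {x : ℝ} (h1 : -1 / 4 < x) (h2 : x < 1 / 4) {z : ℂ}
    (hz1 : 1 / 4 < z.re) (hz2 : z.re < 2) : Summable fun n => wzCompanion x n z := by
  refine Summable.of_norm_bounded (((summable_add_pow_mul_geometric 17).mul_left
    (16 / 3 * wzCoeff x 0 * 4096)).mul_right (Real.exp (69 / 25 * Real.pi * |z.im|))) fun n => ?_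
  have hP := wzCoeff_mul_norm_prod_le h1 (y := z.im)
    (a := fun m : ℕ => (z + x + m) * (x + m - z) / (1 / 2 + x + m) ^ 2) (fun m => by
      have hm : (0 : ℝ) ≤ m := m.cast_nonneg
      apply norm_mul_div_sq_le h1
      · simp only [Complex.add_re, Complex.natCast_re, Complex.ofReal_re]
        rw [abs_le]; constructor <;> linarith
      · simp only [Complex.add_re, Complex.natCast_re, Complex.ofReal_re, Complex.sub_re]
        rw [abs_le]; constructor <;> linarith
      · simp
      · simp) n
  have hn : (0 : ℝ) ≤ n := n.cast_nonneg
  have hN : ‖(n + x : ℂ)‖ ≤ n + 2 := by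
    rw [show (n + x : ℂ) = ((n + x : ℝ) : ℂ) by push_cast; ring, Complex.norm_real,
      Real.norm_eq_abs, abs_le]
    constructor <;> linarith
  have hc := wzCoeff_pos h1 n
  rw [wzCompanion, norm_mul, norm_mul, norm_mul, norm_pow, norm_pow, Complex.norm_real,
    Real.norm_of_nonneg hc.le]
  calc _ ≤ ‖(16 / 3 : ℂ)‖ * (n + 2) ^ 5 * (wzCoeff x 0 * (4096 * (n + 2) ^ 12 *
        (729 / 1000) ^ n) * Real.exp (69 / 25 * Real.pi * |z.im|)) := by
        refine mul_le_mul ?_ hP (by positivity) (by positivity)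
        gcongr
    _ = _ := by norm_num; ring

theorem wzTerm_add_one {x : ℝ} (h1 : -1 / 4 < x) (h2 : x < 1 / 4) (n : ℕ) {z : ℂ}
    (hz : 1 / 4 < z.re) :
    (z + 1 - x) ^ 3 * gammaRatio x (z + 1) ^ 3 * wzTerm x n (z + 1) -
      (z - x) ^ 3 * gammaRatio x z ^ 3 * wzTerm x n z =
      gammaRatio x z ^ 3 * (wzCompanion x n z - wzCompanion x (n + 1) z) := by
  have hn : (0 : ℝ) ≤ n := n.cast_nonneg
  have hr := gammaRatio_add_one h1 h2 hz.le
  have hp := prod_mul_sub x n z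
  have hq := prod_add_one_mul_add x n z
  have hw := wzPoly_add_one (N := n + x) (by linarith) z
  have ht : (wzCoeff x (n + 1) : ℂ) * (64 * (n + x + 1) ^ 5) =
      wzCoeff x n * (27 * (n + x + 1 / 2) ^ 3 * (n + x + 1 / 3) * (n + x + 2 / 3)) := by
    have := congrArg ((↑) : ℝ → ℂ) (wzCoeff_succ h1 n)
    push_cast at this
    exact this
  have hd : (n + x + 1 / 2 : ℂ) ≠ 0 := by
    rw [show (n + x + 1 / 2 : ℂ) = ((n + x + 1 / 2 : ℝ) : ℂ) by push_cast; ring]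
    exact Complex.ofReal_ne_zero.2 (by linarith : (0 : ℝ) < n + x + 1 / 2).ne'
  have hG : wzProd x (n + 1) z =
      wzProd x n z * ((z + x + n) * (x + n - z) / (n + x + 1 / 2) ^ 2) := by
    rw [wzProd, Finset.prod_range_succ, ← wzProd]
    congr 2
    ring
  set P := ∏ m ∈ Finset.range n, ((z + x + m) * (1 - z + x + m) / (1 / 2 + x + m : ℂ) ^ 2)
  set P' := ∏ m ∈ Finset.range n,
      ((z + 1 + x + m) * (1 - (z + 1) + x + m) / (1 / 2 + x + m : ℂ) ^ 2)
  have e1 : (z + 1 - x) ^ 3 * gammaRatio x (z + 1) ^ 3 * wzTerm x n (z + 1) =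
      gammaRatio x z ^ 3 * wzCoeff x n * wzProd x n z ^ 3 *
        ((z + (n + x)) ^ 3 * wzPoly (n + x) (z + 1)) := by
    calc _ = (gammaRatio x (z + 1) * (z + 1 - x)) ^ 3 * wzCoeff x n * P' ^ 3 *
          wzPoly (n + x) (z + 1) := by rw [wzTerm]; ring
      _ = gammaRatio x z ^ 3 * wzCoeff x n * (P' * (z + x)) ^ 3 * wzPoly (n + x) (z + 1) := by
          rw [hr]; ring
      _ = _ := by rw [hq]; ring
  have e2 : (z - x) ^ 3 * gammaRatio x z ^ 3 * wzTerm x n z =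
      gammaRatio x z ^ 3 * wzCoeff x n * wzProd x n z ^ 3 *
        ((z - (n + x)) ^ 3 * wzPoly (n + x) z) := by
    calc _ = gammaRatio x z ^ 3 * wzCoeff x n * (P * (z - x)) ^ 3 * wzPoly (n + x) z := by
          rw [wzTerm]; ring
      _ = _ := by rw [hp]; ring
  have e3 : wzCompanion x (n + 1) z = - (wzCoeff x n * wzProd x n z ^ 3 *
      (9 / 4 * (n + x + 1 / 3) * (n + x + 2 / 3) * (z ^ 2 - (n + x) ^ 2) ^ 3 /
        (n + x + 1 / 2) ^ 3)) := by
    rw [wzCompanion, hG]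
    push_cast
    calc _ = 1 / 12 * (wzCoeff x (n + 1) * (64 * (n + x + 1) ^ 5)) * wzProd x n z ^ 3 *
          ((z + x + n) * (x + n - z) / (n + x + 1 / 2) ^ 2) ^ 3 := by ring
      _ = _ := by rw [ht]; field_simp; ring
  push_cast at hw
  rw [e1, e2, e3, wzCompanion]
  linear_combination (gammaRatio x z ^ 3 * wzCoeff x n * wzProd x n z ^ 3) * hw

theorem wzFun_add_one {x : ℝ} (h1 : -1 / 4 < x) (h2 : x < 1 / 4) {z : ℂ}
    (hz1 : 1 / 4 < z.re) (hz2 : z.re < 1) : wzFun x (z + 1) = wzFun x z := by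
  have s1 := summable_wzTerm h1 h2 hz1 (by linarith)
  have s2 := summable_wzTerm h1 h2 (z := z + 1) (by simp; linarith) (by simp; linarith)
  have s3 := summable_wzCompanion h1 h2 hz1 (by linarith)
  have s4 := (summable_nat_add_iff 1).2 s3
  have hdiff : (z + 1 - x) ^ 3 * gammaRatio x (z + 1) ^ 3 * wzSum x (z + 1) -
      (z - x) ^ 3 * gammaRatio x z ^ 3 * wzSum x z = gammaRatio x z ^ 3 * wzCompanion x 0 z := by
    calc _ = ∑' n, ((z + 1 - x) ^ 3 * gammaRatio x (z + 1) ^ 3 * wzTerm x n (z + 1) -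
          (z - x) ^ 3 * gammaRatio x z ^ 3 * wzTerm x n z) := by
          rw [(s2.mul_left _).tsum_sub (s1.mul_left _), tsum_mul_left, tsum_mul_left, wzSum, wzSum]
      _ = gammaRatio x z ^ 3 * ∑' n, (wzCompanion x n z - wzCompanion x (n + 1) z) := by
          rw [← tsum_mul_left]
          exact tsum_congr fun n => wzTerm_add_one h1 h2 n hz1
      _ = _ := by rw [s3.tsum_sub s4, s3.tsum_eq_zero_add]; ring
  have hR := gammaRatioSum_eq_add h1 h2 hz1.le
  have hc : wzCompanion x 0 z = 16 / 3 * x ^ 5 * wzCoeff x 0 := by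
    simp [wzCompanion, wzProd]
  rw [hc] at hdiff
  rw [wzFun, wzFun, hR]
  linear_combination hdiff

theorem exists_wzFun_eq {x : ℝ} (h1 : -1 / 4 < x) (h2 : x < 1 / 4) :
    ∃ c₀ c₁ c₂ : ℂ, ∀ z : ℂ, 1 / 4 < z.re → z.re < 2 →
      wzFun x z = c₀ + c₁ * Complex.exp (2 * Real.pi * Complex.I * z) +
        c₂ * Complex.exp (-(2 * Real.pi * Complex.I * z)) := by
  have hsub : {z : ℂ | 1 / 4 < z.re ∧ z.re < 2} ⊆ {z | 1 / 4 < z.re} := fun z hz => hz.1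
  have hdiff : DifferentiableOn ℂ (wzFun x) {z | 1 / 4 < z.re ∧ z.re < 2} :=
    (((by fun_prop : DifferentiableOn ℂ (fun z : ℂ => (z - x) ^ 3)
      {z | 1 / 4 < z.re ∧ z.re < 2}).mul (((differentiableOn_gammaRatio h1 h2).mono hsub).pow 3)).mul
      (differentiableOn_wzSum h1 h2)).add
      (((differentiableOn_gammaRatioSum h1 h2).mono hsub).const_mul _)
  obtain ⟨C, hC⟩ := exists_norm_wzSum_le h1 h2
  have hC0 : 0 ≤ C := by
    have := (norm_nonneg _).trans (hC 1 (by norm_num) (by norm_num))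
    simpa using this
  refine eq_trigPolynomial_of_growth_strip hdiff (fun z hz1 hz2 => wzFun_add_one h1 h2 hz1 hz2)
    (C := 1000 * gammaRatioBound x 0 ^ 3 * C +
      ‖(16 / 3 * x ^ 5 * wzCoeff x 0 : ℂ)‖ * ∑' k, gammaRatioBound x k ^ 3)
    (c := 69 / 25 * Real.pi + 7 / 10) (by linarith [Real.pi_gt_three]) ?_
  intro z hz1 hz2
  have hr : ‖gammaRatio x z‖ ≤ gammaRatioBound x 0 := by
    simpa using norm_gammaRatio_add_le h1 h2 hz1.le 0
  have hzx : ‖z - x‖ ≤ 10 * Real.exp (|z.im| / 10) := by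
    have e := Real.add_one_le_exp (|z.im| / 10)
    have := Complex.norm_le_abs_re_add_abs_im (z - x)
    simp only [Complex.sub_re, Complex.sub_im, Complex.ofReal_re, Complex.ofReal_im, sub_zero]
      at this
    have h3 : |z.re - x| ≤ 9 / 4 := abs_le.2 ⟨by linarith, by linarith⟩
    linarith
  have hB := (gammaRatioBound_pos h1 h2 0).le
  have hS : 0 ≤ ∑' k, gammaRatioBound x k ^ 3 :=
    tsum_nonneg fun k => pow_nonneg (gammaRatioBound_pos h1 h2 k).le 3
  have hE1 : 1 ≤ Real.exp ((69 / 25 * Real.pi + 7 / 10) * |z.im|) :=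
    Real.one_le_exp (by have := Real.pi_pos; positivity)
  rw [wzFun]
  refine (norm_add_le _ _).trans ?_
  rw [norm_mul, norm_mul, norm_mul _ (gammaRatioSum x z), norm_pow, norm_pow, add_mul]
  refine add_le_add ?_ ?_
  · calc _ ≤ (10 * Real.exp (|z.im| / 10)) ^ 3 * gammaRatioBound x 0 ^ 3 *
          (C * Real.exp ((69 / 25 * Real.pi + 2 / 5) * |z.im|)) := by
          gcongr
          exact hC z hz1 hz2
      _ = _ := by
          rw [show (69 / 25 * Real.pi + 7 / 10) * |z.im| = (3 : ℕ) * (|z.im| / 10) +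
            (69 / 25 * Real.pi + 2 / 5) * |z.im| by push_cast; ring, Real.exp_add,
            Real.exp_nat_mul]
          ring
  · calc _ ≤ ‖(16 / 3 * x ^ 5 * wzCoeff x 0 : ℂ)‖ * (∑' k, gammaRatioBound x k ^ 3) := by
          gcongr
          exact norm_gammaRatioSum_le h1 h2 hz1.le
      _ ≤ _ := le_mul_of_one_le_right (by positivity) hE1

/-- The product `sin (π (z + x)) Γ(z + x) / Γ(z - x)` is symmetric under `z ↦ 1 - z`. -/
theorem sin_mul_gammaRatio {x : ℝ} {z : ℂ} (h1 : 0 < (z + x).re) (h2 : 0 < (1 - (z + x)).re)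
    (h3 : 0 < (z - x).re) :
    Complex.sin (Real.pi * (z + x)) * ((z - x) * gammaRatio x z) =
      Real.pi / (Complex.Gamma (1 - z - x) * Complex.Gamma (z - x)) := by
  have g1 := Complex.Gamma_ne_zero_of_re_pos h1
  have g2 := Complex.Gamma_ne_zero_of_re_pos h2
  have g3 := Complex.Gamma_ne_zero_of_re_pos h3
  have hzx : z - x ≠ 0 := fun h => by rw [h] at h3; simp at h3
  have hrefl := Complex.Gamma_mul_Gamma_one_sub (z + x)
  have hs : Complex.sin (Real.pi * (z + x)) ≠ 0 := fun h => by
    rw [h, div_zero] at hrefl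
    exact mul_ne_zero g1 g2 hrefl
  rw [eq_div_iff hs] at hrefl
  rw [show 1 - (z + x) = 1 - z - (x : ℂ) by ring] at g2 hrefl
  rw [gammaRatio, show z + 1 - (x : ℂ) = z - x + 1 by ring, Complex.Gamma_add_one _ hzx,
    eq_div_iff (mul_ne_zero g2 g3)]
  field_simp
  linear_combination hrefl

theorem wzFun_symm {x : ℝ} (h1 : -1 / 4 < x) (h2 : x < 1 / 4) {z : ℂ} (hz : z.re = 1 / 2) :
    Complex.sin (Real.pi * (z + x)) ^ 3 * wzFun x z -
      Complex.sin (Real.pi * (1 - z + x)) ^ 3 * wzFun x (1 - z) =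
    16 / 3 * x ^ 5 * wzCoeff x 0 * (Complex.sin (Real.pi * (z + x)) ^ 3 * gammaRatioSum x z -
      Complex.sin (Real.pi * (1 - z + x)) ^ 3 * gammaRatioSum x (1 - z)) := by
  have e1 := sin_mul_gammaRatio (x := x) (z := z) (by simp [hz]; linarith)
    (by simp [hz]; linarith) (by simp [hz]; linarith)
  have e2 := sin_mul_gammaRatio (x := x) (z := 1 - z) (by simp [hz]; linarith)
    (by simp [hz]; linarith) (by simp [hz]; linarith)
  rw [show 1 - (1 - z) - (x : ℂ) = z - x by ring, mul_comm (Complex.Gamma (z - x)), ← e1] at e2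
  have e3 := congrArg (fun w => w ^ 3 * wzSum x z) e2
  simp only [mul_pow] at e3
  rw [wzFun, wzFun, wzSum_one_sub]
  linear_combination -e3

/-- Comparison of the leading coefficients of a Laurent polynomial that tends to zero at zero. -/
theorem coeff_relations_of_tendsto {ι : Type*} {l : Filter ι} [l.NeBot] {X : ι → ℂ}
    (hX : Tendsto X l (𝓝 0)) (hX0 : ∀ i, X i ≠ 0) {c₀ c₁ c₂ P : ℂ}
    (h : Tendsto (fun i => (X i * P - 1) ^ 3 * (c₀ + c₁ * X i + c₂ * (X i)⁻¹) -
      (X i - P) ^ 3 * (c₀ + c₁ * (X i)⁻¹ + c₂ * X i)) l (𝓝 0)) :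
    c₂ = P ^ 3 * c₁ ∧ c₀ * (P ^ 3 - 1) = 3 * c₁ * P ^ 2 * (1 - P ^ 2) := by
  have hc₂ : c₂ = P ^ 3 * c₁ := by
    have l1 := hX.mul h
    have l2 : Tendsto (fun i => (X i * P - 1) ^ 3 * (c₀ * X i + c₁ * X i ^ 2 + c₂) -
        (X i - P) ^ 3 * (c₀ * X i + c₁ + c₂ * X i ^ 2)) l
        (𝓝 ((0 * P - 1) ^ 3 * (c₀ * 0 + c₁ * 0 ^ 2 + c₂) -
        (0 - P) ^ 3 * (c₀ * 0 + c₁ + c₂ * 0 ^ 2))) := by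
      have hc : Continuous fun t : ℂ => (t * P - 1) ^ 3 * (c₀ * t + c₁ * t ^ 2 + c₂) -
        (t - P) ^ 3 * (c₀ * t + c₁ + c₂ * t ^ 2) := by fun_prop
      exact (hc.tendsto 0).comp hX
    have l3 := l1.congr (fun i => by
      have := hX0 i
      show _ = (X i * P - 1) ^ 3 * (c₀ * X i + c₁ * X i ^ 2 + c₂) -
        (X i - P) ^ 3 * (c₀ * X i + c₁ + c₂ * X i ^ 2)
      field_simp)
    have := tendsto_nhds_unique l2 l3
    linear_combination -this
  refine ⟨hc₂, ?_⟩
  have l2 : Tendsto (fun i => (X i * P - 1) ^ 3 * (c₀ + c₁ * X i) -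
      (X i - P) ^ 3 * (c₀ + c₂ * X i) +
      c₁ * (P ^ 3 * (P ^ 3 * X i ^ 2 - 3 * P ^ 2 * X i + 3 * P) -
        (X i ^ 2 - 3 * P * X i + 3 * P ^ 2))) l
      (𝓝 ((0 * P - 1) ^ 3 * (c₀ + c₁ * 0) - (0 - P) ^ 3 * (c₀ + c₂ * 0) +
      c₁ * (P ^ 3 * (P ^ 3 * 0 ^ 2 - 3 * P ^ 2 * 0 + 3 * P) -
        (0 ^ 2 - 3 * P * 0 + 3 * P ^ 2)))) := by
    have hc : Continuous fun t : ℂ => (t * P - 1) ^ 3 * (c₀ + c₁ * t) -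
      (t - P) ^ 3 * (c₀ + c₂ * t) +
      c₁ * (P ^ 3 * (P ^ 3 * t ^ 2 - 3 * P ^ 2 * t + 3 * P) -
        (t ^ 2 - 3 * P * t + 3 * P ^ 2)) := by fun_prop
    exact (hc.tendsto 0).comp hX
  have l3 := h.congr (fun i => by
    have := hX0 i
    show _ = (X i * P - 1) ^ 3 * (c₀ + c₁ * X i) -
      (X i - P) ^ 3 * (c₀ + c₂ * X i) +
      c₁ * (P ^ 3 * (P ^ 3 * X i ^ 2 - 3 * P ^ 2 * X i + 3 * P) -
        (X i ^ 2 - 3 * P * X i + 3 * P ^ 2))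
    rw [hc₂]
    field_simp
    ring)
  have := tendsto_nhds_unique l2 l3
  linear_combination this

theorem sin_eq_of_exp {q : ℂ} {w : ℂ} (hq : Complex.exp (w * Complex.I) = q) :
    2 * Complex.I * q * Complex.sin w = q ^ 2 - 1 := by
  have h : Complex.exp (-w * Complex.I) * q = 1 := by
    rw [← hq, ← Complex.exp_add]; simp
  rw [Complex.sin, hq]
  linear_combination (q * Complex.exp (-w * Complex.I) - q ^ 2) * Complex.I_sq - h

/-- The value at `1/2` is determined by the value at `1 + x`. -/
theorem wzFun_half {x : ℝ} (hx : x ≠ 0) (h1 : -1 / 4 < x) (h2 : x < 1 / 4) :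
    wzFun x (1 / 2) * (2 * Real.sin (Real.pi * x) ^ 2 : ℝ) = wzFun x (1 + x) *
      (8 * Real.cos (Real.pi * x) ^ 4 - 8 * Real.cos (Real.pi * x) ^ 2 + 3 : ℝ) := by
  obtain ⟨c₀, c₁, c₂, hK⟩ := exists_wzFun_eq h1 h2
  obtain ⟨p, hp⟩ : ∃ p : ℂ, p = Complex.exp (Real.pi * x * Complex.I) := ⟨_, rfl⟩
  have hp0 : p ≠ 0 := hp ▸ Complex.exp_ne_zero _
  set z : ℝ → ℂ := fun y => 1 / 2 + y * Complex.I with hz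
  have zre : ∀ y, (z y).re = 1 / 2 := fun y => by simp [hz]
  have zim : ∀ y, (z y).im = y := fun y => by simp [hz]
  set q : ℝ → ℂ := fun y => Complex.exp (Real.pi * z y * Complex.I) with hq
  have hq0 : ∀ y, q y ≠ 0 := fun y => Complex.exp_ne_zero _
  have hqlim : Tendsto q atTop (𝓝 0) := by
    rw [tendsto_zero_iff_norm_tendsto_zero]
    have : ∀ y, ‖q y‖ = Real.exp (-(Real.pi * y)) := fun y => by
      simp [hq, Complex.norm_exp, zim]
    simp only [this]
    exact Real.tendsto_exp_neg_atTop_nhds_zero.comp (tendsto_id.const_mul_atTop Real.pi_pos)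
  have hs1 : ∀ y, 2 * Complex.I * (q y * p) * Complex.sin (Real.pi * (z y + x)) =
      (q y * p) ^ 2 - 1 := fun y => sin_eq_of_exp (by
    rw [hp, hq, ← Complex.exp_add]; ring_nf)
  have hs2 : ∀ y, 2 * Complex.I * (q y * p) * Complex.sin (Real.pi * (1 - z y + x)) =
      q y ^ 2 - p ^ 2 := fun y => by
    have := sin_eq_of_exp (w := Real.pi * (1 - z y + x)) (q := -((q y)⁻¹ * p)) (by
      rw [hp, hq, ← Complex.exp_neg, ← Complex.exp_add, ← neg_one_mul, ← Complex.exp_pi_mul_I,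
        ← Complex.exp_add]; ring_nf)
    have h0 := hq0 y
    field_simp at this
    linear_combination -this
  have hexp : ∀ y, Complex.exp (2 * Real.pi * Complex.I * z y) = q y ^ 2 := fun y => by
    rw [hq, ← Complex.exp_nat_mul]; push_cast; ring_nf
  have hexp' : ∀ y, Complex.exp (2 * Real.pi * Complex.I * (1 - z y)) = (q y ^ 2)⁻¹ := fun y => by
    rw [← hexp, ← Complex.exp_neg, mul_sub, mul_one, sub_eq_add_neg, Complex.exp_add,
      Complex.exp_two_pi_mul_I, one_mul]
  have hU : ∀ y, wzFun x (z y) = c₀ + c₁ * q y ^ 2 + c₂ * (q y ^ 2)⁻¹ := fun y => by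
    rw [hK _ (by rw [zre]; norm_num) (by rw [zre]; norm_num), Complex.exp_neg, hexp]
  have hU' : ∀ y, wzFun x (1 - z y) = c₀ + c₁ * (q y ^ 2)⁻¹ + c₂ * q y ^ 2 := fun y => by
    rw [hK _ (by simp [zre]; norm_num) (by simp [zre]; norm_num), Complex.exp_neg, hexp', inv_inv]
  have hR1 : Tendsto (fun y => gammaRatioSum x (z y)) atTop (𝓝 0) :=
    tendsto_gammaRatioSum h1 h2 (fun y => by rw [zre]; norm_num)
      (by simpa only [zim] using tendsto_abs_atTop_atTop)
  have hR2 : Tendsto (fun y => gammaRatioSum x (1 - z y)) atTop (𝓝 0) :=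
    tendsto_gammaRatioSum h1 h2 (fun y => by simp [zre]; norm_num)
      (by simpa [zim] using tendsto_abs_atTop_atTop)
  have hX : Tendsto (fun y => q y ^ 2) atTop (𝓝 0) := by simpa using hqlim.pow 2
  have hlim : Tendsto (fun y => (q y ^ 2 * p ^ 2 - 1) ^ 3 *
      (c₀ + c₁ * q y ^ 2 + c₂ * (q y ^ 2)⁻¹) - (q y ^ 2 - p ^ 2) ^ 3 *
      (c₀ + c₁ * (q y ^ 2)⁻¹ + c₂ * q y ^ 2)) atTop (𝓝 0) := by
    have l1 : Tendsto (fun y => 16 / 3 * x ^ 5 * wzCoeff x 0 *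
        ((q y ^ 2 * p ^ 2 - 1) ^ 3 * gammaRatioSum x (z y) -
          (q y ^ 2 - p ^ 2) ^ 3 * gammaRatioSum x (1 - z y))) atTop
        (𝓝 (16 / 3 * x ^ 5 * wzCoeff x 0 * ((0 * p ^ 2 - 1) ^ 3 * 0 - (0 - p ^ 2) ^ 3 * 0))) :=
      ((((hX.mul_const _).sub_const 1).pow 3 |>.mul hR1).sub
        (((hX.sub_const _).pow 3).mul hR2)).const_mul _
    simp only [mul_zero, sub_zero] at l1
    refine l1.congr fun y => ?_
    rw [← hU, ← hU', ← mul_pow, ← hs1, ← hs2]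
    linear_combination -(2 * Complex.I * (q y * p)) ^ 3 * wzFun_symm h1 h2 (zre y)
  obtain ⟨r1, r2⟩ := coeff_relations_of_tendsto hX (fun y => pow_ne_zero 2 (hq0 y)) hlim
  have hp6 : (p ^ 2) ^ 3 - 1 ≠ 0 := by
    have hs : Real.sin (3 * (Real.pi * x)) ≠ 0 := by
      have hpi := Real.pi_pos
      rcases hx.lt_or_gt with hneg | hpos
      · exact (Real.sin_neg_of_neg_of_neg_pi_lt (by nlinarith) (by nlinarith)).ne
      · exact (Real.sin_pos_of_pos_of_lt_pi (by positivity) (by nlinarith)).ne'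
    have := sin_eq_of_exp (q := p ^ 3) (w := (3 * (Real.pi * x) : ℝ)) (by
      rw [hp, ← Complex.exp_nat_mul]; push_cast; ring_nf)
    rw [← pow_mul, show 2 * 3 = 3 * 2 from rfl, pow_mul, ← this, ← Complex.ofReal_sin]
    exact mul_ne_zero (mul_ne_zero (by simp) (pow_ne_zero 3 hp0)) (Complex.ofReal_ne_zero.2 hs)
  have hE1 : Complex.exp (2 * Real.pi * Complex.I * (1 + x)) = p ^ 2 := by
    rw [mul_add, mul_one, Complex.exp_add, Complex.exp_two_pi_mul_I, hp, ← Complex.exp_nat_mul]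
    push_cast; ring_nf
  have hE2 : Complex.exp (2 * Real.pi * Complex.I * (1 / 2)) = -1 := by
    rw [← Complex.exp_pi_mul_I]; ring_nf
  have v1 := hK (1 + x) (by simp; linarith) (by simp; linarith)
  have v2 := hK (1 / 2) (by norm_num) (by norm_num)
  rw [Complex.exp_neg, hE1] at v1
  rw [Complex.exp_neg, hE2] at v2
  have hs := sin_eq_of_exp (q := p) (w := (Real.pi * x : ℝ)) (by rw [hp]; push_cast; rfl)
  have hc : 2 * p * Complex.cos (Real.pi * x : ℝ) = p ^ 2 + 1 := by
    have h : Complex.exp (-(Real.pi * x : ℝ) * Complex.I) * p = 1 := by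
      rw [hp, ← Complex.exp_add]; push_cast; simp
    rw [Complex.cos, show ((Real.pi * x : ℝ) : ℂ) * Complex.I = Real.pi * x * Complex.I by
      push_cast; ring, ← hp]
    linear_combination h
  push_cast
  rw [← Complex.ofReal_mul]
  set S := Complex.sin ((Real.pi * x : ℝ) : ℂ)
  set C := Complex.cos ((Real.pi * x : ℝ) : ℂ)
  have hS2 : S ^ 2 = -(p ^ 2 - 1) ^ 2 / (4 * p ^ 2) := by
    rw [eq_div_iff (by simp [hp0]), ← hs]
    linear_combination (4 * p ^ 2 * S ^ 2) * Complex.I_sq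
  have hC2 : C ^ 2 = (p ^ 2 + 1) ^ 2 / (4 * p ^ 2) := by
    rw [eq_div_iff (by simp [hp0]), ← hc]; ring
  rw [show C ^ 4 = (C ^ 2) ^ 2 by ring, hS2, hC2]
  apply mul_left_cancel₀ hp6
  have w1 : ((p ^ 2) ^ 3 - 1) * wzFun x (1 + x) = c₁ * p ^ 2 * (p ^ 2 - 1) ^ 3 * (p ^ 2 + 1) := by
    rw [v1, r1]
    have : (p ^ 2) ^ 3 * c₁ * (p ^ 2)⁻¹ = (p ^ 2) ^ 2 * c₁ := by field_simp
    rw [this]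
    linear_combination r2
  have w2 : ((p ^ 2) ^ 3 - 1) * wzFun x (1 / 2) =
      c₁ * (1 + 3 * (p ^ 2) ^ 2 - 3 * (p ^ 2) ^ 4 - (p ^ 2) ^ 6) := by
    rw [v2, r1, show (-1 : ℂ)⁻¹ = -1 by norm_num]
    linear_combination r2
  rw [← mul_assoc _ (wzFun x (1 / 2)), ← mul_assoc _ (wzFun x (1 + x)), w1, w2]
  field_simp
  ring

theorem Gamma_one_add_mul_Gamma_one_sub {y : ℝ} (h1 : -1 < y) (h2 : y < 1) :
    Real.Gamma (1 + y) * Real.Gamma (1 - y) * Real.sin (Real.pi * y) = Real.pi * y := by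
  rcases eq_or_ne y 0 with rfl | hy
  · simp
  have hs : Real.sin (Real.pi * y) ≠ 0 := by
    have hpi := Real.pi_pos
    rcases hy.lt_or_gt with hneg | hpos
    · exact (Real.sin_neg_of_neg_of_neg_pi_lt (by nlinarith) (by nlinarith)).ne
    · exact (Real.sin_pos_of_pos_of_lt_pi (by positivity) (by nlinarith)).ne'
  have h := Real.Gamma_mul_Gamma_one_sub y
  rw [eq_div_iff hs] at h
  rw [add_comm 1 y, Real.Gamma_add_one hy]
  linear_combination y * h

theorem wzCoeff_zero_eq {x : ℝ} (h1 : -1 / 4 < x) :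
    wzCoeff x 0 = Real.Gamma (1 / 2 + x) ^ 3 * Real.Gamma (1 + 3 * x) /
      (((2 : ℝ) ^ (2 * x)) ^ 3 * Real.Gamma (1 + x) ^ 6 * √Real.pi ^ 3) := by
  have htri := Gamma_triplication (x := x) (by linarith)
  have g1 : 0 < Real.Gamma (1 / 3) := Real.Gamma_pos_of_pos (by norm_num)
  have g2 : 0 < Real.Gamma (2 / 3) := Real.Gamma_pos_of_pos (by norm_num)
  have g3 : 0 < Real.Gamma (1 + x) := Real.Gamma_pos_of_pos (by linarith)
  have g4 : 0 < √Real.pi := Real.sqrt_pos.2 Real.pi_pos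
  have hL : 0 < (2 : ℝ) ^ (2 * x) := by positivity
  have hpow : (3 / 4 : ℝ) ^ (3 * x) = (27 : ℝ) ^ x / ((2 : ℝ) ^ (2 * x)) ^ 3 := by
    have e1 : ((2 : ℝ) ^ (2 * x)) ^ 3 = (64 : ℝ) ^ x := by
      rw [← Real.rpow_mul_natCast (by norm_num), show 2 * x * (3 : ℕ) = (6 : ℕ) * x by push_cast; ring,
        Real.rpow_mul (by norm_num), Real.rpow_natCast]
      norm_num
    have e2 : (3 / 4 : ℝ) ^ (3 * x) = (27 / 64 : ℝ) ^ x := by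
      rw [show (3 : ℝ) * x = (3 : ℕ) * x by push_cast; ring, Real.rpow_mul (by norm_num),
        Real.rpow_natCast]
      norm_num
    rw [e1, e2, Real.div_rpow (by norm_num) (by norm_num)]
  simp only [wzCoeff, Nat.cast_zero, zero_add, pochG, Real.Gamma_one, div_one,
    Real.Gamma_one_half_eq, hpow]
  generalize Real.Gamma (1 / 2 + x) = A
  generalize Real.Gamma (1 / 3 + x) = B at htri ⊢
  generalize Real.Gamma (2 / 3 + x) = C at htri ⊢
  generalize Real.Gamma (1 + 3 * x) = D at htri ⊢
  field_simp
  linear_combination A ^ 3 * htri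

/-- The evaluation of the product of Gamma values that appears in the closed form. -/
theorem gamma_closed_form {x : ℝ} (hx : x ≠ 0) (h1 : -1 / 4 < x) (h2 : x < 1 / 4) :
    2 / 3 * x ^ 2 * wzCoeff x 0 * Real.Gamma (1 + 2 * x) ^ 3 *
      (Real.Gamma (1 + x) * Real.Gamma (1 - 3 * x) /
        (Real.Gamma (1 + 2 * x) * Real.Gamma (1 - 2 * x) * Real.Gamma (1 - x) ^ 2)) *
      (Real.pi ^ 2 * (4 * Real.cos (Real.pi * x) ^ 4 - Real.cos (Real.pi * x) ^ 2)) =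
    2 * Real.sin (Real.pi * x) ^ 2 *
      (Real.Gamma (1 / 2 + x) / Real.Gamma (1 / 2 - x)) ^ 3 := by
  have f1 := Gamma_one_add_mul_Gamma_one_sub (y := x) (by linarith) (by linarith)
  have f2 := Gamma_one_add_mul_Gamma_one_sub (y := 2 * x) (by linarith) (by linarith)
  have f3 := Gamma_one_add_mul_Gamma_one_sub (y := 3 * x) (by linarith) (by linarith)
  have f4 := Real.Gamma_mul_Gamma_add_half (1 / 2 - x)
  have a : 0 < Real.Gamma (1 + x) := Real.Gamma_pos_of_pos (by linarith)
  have a' : 0 < Real.Gamma (1 - x) := Real.Gamma_pos_of_pos (by linarith)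
  have d : 0 < Real.Gamma (1 + 2 * x) := Real.Gamma_pos_of_pos (by linarith)
  have d' : 0 < Real.Gamma (1 - 2 * x) := Real.Gamma_pos_of_pos (by linarith)
  have e : 0 < Real.Gamma (1 + 3 * x) := Real.Gamma_pos_of_pos (by linarith)
  have e' : 0 < Real.Gamma (1 - 3 * x) := Real.Gamma_pos_of_pos (by linarith)
  have w : 0 < √Real.pi := Real.sqrt_pos.2 Real.pi_pos
  have hw : Real.pi = √Real.pi ^ 2 := (Real.sq_sqrt Real.pi_pos.le).symm
  have hL : 0 < (2 : ℝ) ^ (2 * x) := by positivity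
  rw [show Real.pi * (2 * x) = 2 * (Real.pi * x) by ring, Real.sin_two_mul] at f2
  rw [show Real.pi * (3 * x) = 3 * (Real.pi * x) by ring, Real.sin_three_mul] at f3
  rw [show 1 / 2 - x + 1 / 2 = 1 - x by ring, show 2 * (1 / 2 - x) = 1 - 2 * x by ring,
    show 1 - (1 - 2 * x) = 2 * x by ring] at f4
  have hpx : Real.pi * x ≠ 0 := mul_ne_zero Real.pi_ne_zero hx
  have hs : Real.sin (Real.pi * x) =
      Real.pi * x / (Real.Gamma (1 + x) * Real.Gamma (1 - x)) := by
    rw [eq_div_iff (by positivity)]; linear_combination f1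
  have hs0 : Real.sin (Real.pi * x) ≠ 0 := by
    rw [hs]; exact div_ne_zero hpx (by positivity)
  have hc : Real.cos (Real.pi * x) = Real.Gamma (1 + x) * Real.Gamma (1 - x) /
      (Real.Gamma (1 + 2 * x) * Real.Gamma (1 - 2 * x)) := by
    rw [eq_div_iff (by positivity)]
    apply mul_left_cancel₀ hs0
    linear_combination f2 / 2 - f1
  have hk : 4 * Real.cos (Real.pi * x) ^ 2 - 1 = 3 * (Real.Gamma (1 + x) * Real.Gamma (1 - x)) /
      (Real.Gamma (1 + 3 * x) * Real.Gamma (1 - 3 * x)) := by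
    rw [eq_div_iff (by positivity)]
    apply mul_left_cancel₀ hs0
    rw [Real.cos_sq']
    linear_combination f3 - 3 * f1
  have hh : Real.Gamma (1 / 2 - x) =
      Real.Gamma (1 - 2 * x) * (2 : ℝ) ^ (2 * x) * √Real.pi / Real.Gamma (1 - x) := by
    rw [eq_div_iff a'.ne']; exact f4
  rw [show 4 * Real.cos (Real.pi * x) ^ 4 - Real.cos (Real.pi * x) ^ 2 =
    Real.cos (Real.pi * x) ^ 2 * (4 * Real.cos (Real.pi * x) ^ 2 - 1) by ring, hk, hc, hs, hh,
    wzCoeff_zero_eq h1]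
  generalize √Real.pi = v at *
  rw [hw]
  field_simp

theorem gammaRatio_one_add {x : ℝ} (h1 : -1 / 4 < x) (h2 : x < 1 / 4) (k : ℕ) :
    2 * x * gammaRatio x (1 + x + k) = Real.Gamma (1 + 2 * x) *
      (∏ m ∈ Finset.range (k + 1), ((2 * x + m) / (1 + m)) : ℝ) := by
  induction k with
  | zero =>
    rw [gammaRatio]
    have e1 : (1 + x + (0 : ℕ) + x : ℂ) = ((1 + 2 * x : ℝ) : ℂ) := by push_cast; ring
    have e2 : (1 + x + (0 : ℕ) + 1 - x : ℂ) = 1 + 1 := by push_cast; ring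
    rw [e1, e2, Complex.Gamma_add_one 1 one_ne_zero, Complex.Gamma_one, Complex.Gamma_ofReal]
    simp
    ring
  | succ k ih =>
    have hk : (0 : ℝ) ≤ k := k.cast_nonneg
    have h := gammaRatio_add_one h1 h2 (z := 1 + x + k) (by simp; linarith)
    rw [Finset.prod_range_succ]
    have hk2 : (1 + (k + 1) : ℂ) ≠ 0 := by
      have : (1 + (k + 1) : ℝ) ≠ 0 := by positivity
      exact_mod_cast this
    push_cast at ih ⊢
    rw [← mul_assoc, ← ih]
    rw [show (1 + x + (k + 1) : ℂ) = 1 + x + k + 1 by ring]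
    field_simp
    linear_combination (x : ℂ) * h

theorem wzFun_one_add {x : ℝ} (hx : x ≠ 0) (h1 : -1 / 4 < x) (h2 : x < 1 / 4) :
    wzFun x (1 + x) = (2 / 3 * x ^ 2 * wzCoeff x 0 * Real.Gamma (1 + 2 * x) ^ 3 *
      (Real.Gamma (1 + x) * Real.Gamma (1 - 3 * x) /
        (Real.Gamma (1 + 2 * x) * Real.Gamma (1 - 2 * x) * Real.Gamma (1 - x) ^ 2)) : ℝ) := by
  have hxc : (x : ℂ) ≠ 0 := Complex.ofReal_ne_zero.2 hx
  set S := Real.Gamma (1 + x) * Real.Gamma (1 - 3 * x) /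
        (Real.Gamma (1 + 2 * x) * Real.Gamma (1 - 2 * x) * Real.Gamma (1 - x) ^ 2) with hS
  have hdix := dixon_cube hx h1 h2
  rw [← hS] at hdix
  have hdix' := Complex.hasSum_ofReal.2 ((hasSum_nat_add_iff' 1).2 hdix)
  have hR : 8 * x ^ 3 * gammaRatioSum x (1 + x) = Real.Gamma (1 + 2 * x) ^ 3 * (S - 1) := by
    rw [gammaRatioSum, ← tsum_mul_left]
    refine HasSum.tsum_eq ?_
    have := hdix'.mul_left ((Real.Gamma (1 + 2 * x) : ℂ) ^ 3)
    simp only [Finset.range_one, Finset.sum_singleton, Finset.range_zero, Finset.prod_empty,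
      one_pow] at this
    push_cast at this
    refine this.congr_fun fun k => ?_
    have hk := gammaRatio_one_add h1 h2 k
    push_cast at hk
    rw [← mul_pow, ← hk]
    ring
  have hQ : wzSum x (1 + x) = wzCoeff x 0 * (2 / 3 * x ^ 2) := by
    rw [wzSum, tsum_eq_single 0]
    · have hd : (2 * x + 1 : ℂ) ≠ 0 := by
        have : (2 * x + 1 : ℝ) ≠ 0 := by linarith
        exact_mod_cast this
      simp only [wzTerm, Finset.range_zero, Finset.prod_empty, one_pow, mul_one, Nat.cast_zero,
        zero_add, wzPoly]
      obtain ⟨D, hD⟩ : ∃ D : ℂ, D = 2 * x + 1 := ⟨_, rfl⟩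
      have hxD : (x : ℂ) = (D - 1) / 2 := by rw [hD]; ring
      rw [← hD] at hd ⊢
      rw [hxD]
      congr 1
      field_simp
      ring
    · intro n hn
      rw [wzTerm, Finset.prod_eq_zero (Finset.mem_range.2 (Nat.pos_of_ne_zero hn)) (by simp)]
      simp
  have hr : gammaRatio x (1 + x) = Real.Gamma (1 + 2 * x) := by
    have := gammaRatio_one_add h1 h2 0
    simp only [Nat.cast_zero, add_zero, zero_add, Finset.range_one, Finset.prod_singleton,
      div_one] at this
    push_cast at this
    apply mul_left_cancel₀ (mul_ne_zero two_ne_zero hxc)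
    linear_combination this
  rw [wzFun, hQ, hr]
  push_cast
  linear_combination 2 / 3 * (x : ℂ) ^ 2 * wzCoeff x 0 * hR

theorem pochR_pos {a : ℝ} (ha : 0 < a) (n : ℕ) : 0 < pochR a n :=
  Finset.prod_pos fun j _ => by positivity

theorem pochR_succ (a : ℝ) (n : ℕ) : pochR a (n + 1) = pochR a n * (a + n) :=
  Finset.prod_range_succ _ _

theorem gammaRatio_half_add {x : ℝ} (h1 : -1 / 4 < x) (h2 : x < 1 / 4) (k : ℕ) :
    gammaRatio x (1 / 2 + k) = (Real.Gamma (1 / 2 + x) / Real.Gamma (1 / 2 - x) / (1 / 2 - x) *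
      (pochR (1 / 2 + x) k / pochR (3 / 2 - x) k) : ℝ) := by
  induction k with
  | zero =>
    have e1 : (1 / 2 + (0 : ℕ) + x : ℂ) = ((1 / 2 + x : ℝ) : ℂ) := by push_cast; ring
    have e2 : (1 / 2 + (0 : ℕ) + 1 - x : ℂ) = ((1 / 2 - x + 1 : ℝ) : ℂ) := by push_cast; ring
    rw [gammaRatio, e1, e2, Complex.Gamma_ofReal, Complex.Gamma_ofReal,
      Real.Gamma_add_one (by linarith), ← Complex.ofReal_div]
    congr 1
    simp only [pochR, Finset.range_zero, Finset.prod_empty, div_one, mul_one]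
    rw [div_div, mul_comm]
  | succ k ih =>
    have hk : (0 : ℝ) ≤ k := k.cast_nonneg
    have h := gammaRatio_add_one h1 h2 (z := 1 / 2 + k) (by simp; linarith)
    have hp := pochR_pos (a := 3 / 2 - x) (by linarith) k
    have hd : 0 < 3 / 2 - x + k := by linarith
    have e1 : (1 / 2 + k + 1 - x : ℂ) = ((3 / 2 - x + k : ℝ) : ℂ) := by push_cast; ring
    have e2 : (1 / 2 + k + x : ℂ) = ((1 / 2 + x + k : ℝ) : ℂ) := by push_cast; ring
    rw [e1, e2, ih, ← Complex.ofReal_mul] at h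
    rw [show (1 / 2 + (k + 1 : ℕ) : ℂ) = 1 / 2 + k + 1 by push_cast; ring,
      eq_div_of_mul_eq (Complex.ofReal_ne_zero.2 hd.ne') h, ← Complex.ofReal_div,
      pochR_succ, pochR_succ]
    congr 1
    field_simp

theorem wzTerm_half {x : ℝ} (h1 : -1 / 4 < x) (n : ℕ) : wzTerm x n (1 / 2) =
    (1 / 48 * (wzCoeff x n * (74 * (n + x) ^ 2 + 27 * (n + x) + 3)) : ℝ) := by
  have hprod : ∏ m ∈ Finset.range n,
      ((1 / 2 + x + m) * (1 - 1 / 2 + x + m) / (1 / 2 + x + m : ℂ) ^ 2) = 1 := by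
    refine Finset.prod_eq_one fun m _ => ?_
    have hm : (0 : ℝ) ≤ m := m.cast_nonneg
    have hd : (1 / 2 + x + m : ℂ) ≠ 0 := by
      rw [show (1 / 2 + x + m : ℂ) = ((1 / 2 + x + m : ℝ) : ℂ) by push_cast; ring]
      exact Complex.ofReal_ne_zero.2 (by linarith : (0 : ℝ) < 1 / 2 + x + m).ne'
    rw [show (1 - 1 / 2 : ℂ) = 1 / 2 by norm_num, ← sq, div_self (pow_ne_zero 2 hd)]
  rw [wzTerm, hprod, wzPoly]
  push_cast
  ring

theorem summable_wzCoeff_mul {x : ℝ} (h1 : -1 / 4 < x) (h2 : x < 1 / 4) :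
    Summable fun n : ℕ => wzCoeff x n * (74 * ((n : ℝ) + x) ^ 2 + 27 * (n + x) + 3) := by
  have h := summable_wzTerm h1 h2 (z := 1 / 2) (by norm_num) (by norm_num)
  simp only [wzTerm_half h1] at h
  exact (summable_mul_left_iff (by norm_num)).1 (Complex.summable_ofReal.1 h)

theorem summable_pochR_div {x : ℝ} (h1 : -1 / 4 < x) (h2 : x < 1 / 4) :
    Summable fun n : ℕ => (pochR (1 / 2 + x) n / pochR (3 / 2 - x) n) ^ 3 := by
  have h := summable_gammaRatio_pow h1 h2 (z := 1 / 2) (by norm_num)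
  have hne : Real.Gamma (1 / 2 + x) / Real.Gamma (1 / 2 - x) / (1 / 2 - x) ≠ 0 :=
    div_ne_zero (div_ne_zero (Real.Gamma_pos_of_pos (by linarith)).ne'
      (Real.Gamma_pos_of_pos (by linarith)).ne') (by linarith)
  simp only [gammaRatio_half_add h1 h2, ← Complex.ofReal_pow, mul_pow] at h
  exact (summable_mul_left_iff (pow_ne_zero 3 hne)).1 (Complex.summable_ofReal.1 h)

theorem wzFun_half_eq {x : ℝ} (h1 : -1 / 4 < x) (h2 : x < 1 / 4) :
    wzFun x (1 / 2) = ((Real.Gamma (1 / 2 + x) / Real.Gamma (1 / 2 - x)) ^ 3 *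
      (1 / 48 * (∑' n : ℕ, wzCoeff x n * (74 * ((n : ℝ) + x) ^ 2 + 27 * (n + x) + 3)) -
        wzCoeff x 0 * (128 * x ^ 5 / (3 * (2 * x - 1) ^ 3)) *
          ∑' n : ℕ, (pochR (1 / 2 + x) n / pochR (3 / 2 - x) n) ^ 3) : ℝ) := by
  have hd : 2 * x - 1 ≠ 0 := by linarith
  have hd' : 1 / 2 - x ≠ 0 := by linarith
  have hr : (1 / 2 - x : ℂ) * gammaRatio x (1 / 2) =
      (Real.Gamma (1 / 2 + x) / Real.Gamma (1 / 2 - x) : ℝ) := by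
    have := gammaRatio_half_add h1 h2 0
    simp only [Nat.cast_zero, add_zero, pochR, Finset.range_zero, Finset.prod_empty, div_one,
      mul_one] at this
    rw [this, show (1 / 2 - x : ℂ) = ((1 / 2 - x : ℝ) : ℂ) by push_cast; ring,
      ← Complex.ofReal_mul, mul_div_cancel₀ _ hd']
  have hQ : wzSum x (1 / 2) = (1 / 48 *
      (∑' n : ℕ, wzCoeff x n * (74 * ((n : ℝ) + x) ^ 2 + 27 * (n + x) + 3)) : ℝ) := by
    rw [wzSum, ← tsum_mul_left, Complex.ofReal_tsum]
    exact tsum_congr fun n => wzTerm_half h1 n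
  have hR : gammaRatioSum x (1 / 2) =
      ((Real.Gamma (1 / 2 + x) / Real.Gamma (1 / 2 - x) / (1 / 2 - x)) ^ 3 *
        ∑' n : ℕ, (pochR (1 / 2 + x) n / pochR (3 / 2 - x) n) ^ 3 : ℝ) := by
    rw [gammaRatioSum, ← tsum_mul_left, Complex.ofReal_tsum]
    refine tsum_congr fun n => ?_
    rw [gammaRatio_half_add h1 h2, ← Complex.ofReal_pow, mul_pow]
  rw [wzFun, ← mul_pow, hr, hQ, hR]
  generalize (∑' n : ℕ, wzCoeff x n * (74 * ((n : ℝ) + x) ^ 2 + 27 * (n + x) + 3)) = T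
  generalize (∑' n : ℕ, (pochR (1 / 2 + x) n / pochR (3 / 2 - x) n) ^ 3) = S
  generalize Real.Gamma (1 / 2 + x) / Real.Gamma (1 / 2 - x) = r
  rw [show (16 / 3 * x ^ 5 * wzCoeff x 0 : ℂ) = ((16 / 3 * x ^ 5 * wzCoeff x 0 : ℝ) : ℂ) by
      push_cast; ring, ← Complex.ofReal_pow, ← Complex.ofReal_mul, ← Complex.ofReal_mul,
    ← Complex.ofReal_add]
  congr 1
  generalize wzCoeff x 0 = c
  obtain ⟨d, rfl⟩ : ∃ d, x = (d + 1) / 2 := ⟨2 * x - 1, by ring⟩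
  have hd0 : d ≠ 0 := by simpa [mul_div_cancel₀] using hd
  rw [show 1 / 2 - (d + 1) / 2 = -d / 2 by ring, show 2 * ((d + 1) / 2) - 1 = d by ring]
  field_simp
  ring

theorem identity_of_ne_zero {x : ℝ} (hx : x ≠ 0) (h1 : -1 / 4 < x) (h2 : x < 1 / 4) :
    1 / 48 * (∑' n : ℕ, wzCoeff x n * (74 * ((n : ℝ) + x) ^ 2 + 27 * (n + x) + 3)) =
      1 / Real.pi ^ 2 *
          ((8 * Real.cos (Real.pi * x) ^ 4 - 8 * Real.cos (Real.pi * x) ^ 2 + 3) /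
            (4 * Real.cos (Real.pi * x) ^ 4 - Real.cos (Real.pi * x) ^ 2)) +
        wzCoeff x 0 * (128 * x ^ 5 / (3 * (2 * x - 1) ^ 3)) *
          ∑' n : ℕ, (pochR (1 / 2 + x) n / pochR (3 / 2 - x) n) ^ 3 := by
  have hA := wzFun_half hx h1 h2
  have hG := gamma_closed_form hx h1 h2
  rw [wzFun_half_eq h1 h2, wzFun_one_add hx h1 h2, ← Complex.ofReal_mul, ← Complex.ofReal_mul,
    Complex.ofReal_inj] at hA
  have hr : Real.Gamma (1 / 2 + x) / Real.Gamma (1 / 2 - x) ≠ 0 :=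
    div_ne_zero (Real.Gamma_pos_of_pos (by linarith)).ne'
      (Real.Gamma_pos_of_pos (by linarith)).ne'
  have hs : Real.sin (Real.pi * x) ≠ 0 := by
    rw [Real.sin_ne_zero_iff]
    intro n hn
    have hn' : (n : ℝ) = x := by
      rw [mul_comm] at hn
      exact mul_left_cancel₀ Real.pi_ne_zero hn
    have l1 : (-1 : ℝ) < n := by linarith
    have l2 : (n : ℝ) < 1 := by linarith
    have : n = 0 := by
      have : -1 < n := by exact_mod_cast l1
      have : n < 1 := by exact_mod_cast l2
      omega
    exact hx (by rw [← hn', this, Int.cast_zero])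
  have hne : 2 * Real.sin (Real.pi * x) ^ 2 *
      (Real.Gamma (1 / 2 + x) / Real.Gamma (1 / 2 - x)) ^ 3 ≠ 0 := by positivity
  have hc : 4 * Real.cos (Real.pi * x) ^ 4 - Real.cos (Real.pi * x) ^ 2 ≠ 0 := by
    intro h
    rw [h, mul_zero, mul_zero] at hG
    exact hne hG.symm
  rw [← sub_eq_iff_eq_add, div_mul_div_comm, one_mul,
    eq_div_iff (mul_ne_zero (pow_ne_zero 2 Real.pi_ne_zero) hc)]
  refine mul_left_cancel₀ hne ?_
  linear_combination
    Real.pi ^ 2 * (4 * Real.cos (Real.pi * x) ^ 4 - Real.cos (Real.pi * x) ^ 2) * hA +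
      (8 * Real.cos (Real.pi * x) ^ 4 - 8 * Real.cos (Real.pi * x) ^ 2 + 3) * hG

theorem continuousAt_pochG {a t : ℝ} (hat : 0 < a + t) : ContinuousAt (pochG a) t := by
  have h : ContinuousAt Real.Gamma (a + t) := (Real.differentiableAt_Gamma fun m => by
    have : (0 : ℝ) ≤ m := m.cast_nonneg
    linarith).continuousAt
  exact (ContinuousAt.comp (f := fun t => a + t) h (by fun_prop)).div_const _

theorem continuousAt_wzCoeff (n : ℕ) : ContinuousAt (fun x => wzCoeff x n) 0 := by
  have hn : (0 : ℝ) ≤ n := n.cast_nonneg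
  have hP : ∀ a : ℝ, 0 < a → ContinuousAt (fun x : ℝ => pochG a (n + x)) 0 := fun a ha =>
    ContinuousAt.comp (f := fun x : ℝ => (n : ℝ) + x)
      (continuousAt_pochG (by simp; positivity)) (by fun_prop)
  have hpow : ContinuousAt (fun x : ℝ => (3 / 4 : ℝ) ^ ((3 : ℝ) * ((n : ℝ) + x))) 0 :=
    (Real.continuous_const_rpow (by norm_num)).continuousAt.comp (by fun_prop)
  exact hpow.mul (((((hP _ (by norm_num)).pow 3).mul (hP _ (by norm_num))).mul
    (hP _ (by norm_num))).div ((hP _ one_pos).pow 5)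
      (pow_ne_zero 5 (pochG_pos one_pos (by positivity)).ne'))

theorem tendsto_tsum_wzCoeff_mul :
    Tendsto (fun x => ∑' n : ℕ, wzCoeff x n * (74 * ((n : ℝ) + x) ^ 2 + 27 * (n + x) + 3))
      (𝓝 0) (𝓝 (∑' n : ℕ, wzCoeff 0 n * (74 * ((n : ℝ) + 0) ^ 2 + 27 * (n + 0) + 3))) := by
  refine tendsto_tsum_of_dominated_convergence
    ((summable_add_pow_mul_geometric 2).mul_left ((wzCoeff 0 0 + 1) * 104)) (fun n => ?_) ?_
  · exact ((continuousAt_wzCoeff n).mul (by fun_prop)).tendsto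
  · filter_upwards [(continuousAt_wzCoeff 0).eventually_le_const (lt_add_one _),
      Ioo_mem_nhds (by norm_num : (-1 / 4 : ℝ) < 0) (by norm_num : (0 : ℝ) < 1 / 4)] with x hx hI n
    have hn : (0 : ℝ) ≤ n := n.cast_nonneg
    have hpow : (27 / 64 : ℝ) ^ n ≤ (729 / 1000) ^ n :=
      pow_le_pow_left₀ (by norm_num) (by norm_num) n
    have hM : 0 ≤ wzCoeff 0 0 + 1 := (wzCoeff_pos (x := 0) (by norm_num) 0).le.trans (by linarith)
    have hq0 : 0 ≤ 74 * ((n : ℝ) + x) ^ 2 + 27 * (n + x) + 3 := by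
      nlinarith [sq_nonneg (148 * ((n : ℝ) + x) + 27)]
    have hq : 74 * ((n : ℝ) + x) ^ 2 + 27 * (n + x) + 3 ≤ 104 * (n + 2) ^ 2 := by
      nlinarith [hI.1, hI.2]
    rw [Real.norm_of_nonneg (mul_nonneg (wzCoeff_pos hI.1 n).le hq0)]
    calc _ ≤ (wzCoeff 0 0 + 1) * (729 / 1000) ^ n * (104 * ((n : ℝ) + 2) ^ 2) := by
          refine mul_le_mul ((wzCoeff_le hI.1 n).trans ?_) hq hq0 (by positivity)
          gcongr
      _ = _ := by ring

theorem pochR_div_le_pochR_div {x y : ℝ} (h1 : -1 / 4 < x) (hxy : x ≤ y) (h2 : y < 1 / 4) (n : ℕ) :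
    pochR (1 / 2 + x) n / pochR (3 / 2 - x) n ≤ pochR (1 / 2 + y) n / pochR (3 / 2 - y) n := by
  refine div_le_div₀ (pochR_pos (by linarith) n).le ?_ (pochR_pos (by linarith) n) ?_
  · refine Finset.prod_le_prod (fun j _ => ?_) fun j _ => by gcongr
    have : (0 : ℝ) ≤ j := j.cast_nonneg
    linarith
  · refine Finset.prod_le_prod (fun j _ => ?_) fun j _ => by gcongr
    have : (0 : ℝ) ≤ j := j.cast_nonneg
    linarith

theorem tendsto_remainder : Tendsto (fun x : ℝ => wzCoeff x 0 *
    (128 * x ^ 5 / (3 * (2 * x - 1) ^ 3)) *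
      ∑' n : ℕ, (pochR (1 / 2 + x) n / pochR (3 / 2 - x) n) ^ 3) (𝓝 0) (𝓝 0) := by
  have h : Tendsto (fun x : ℝ => wzCoeff x 0 * (128 * x ^ 5 / (3 * (2 * x - 1) ^ 3))) (𝓝 0)
      (𝓝 0) := by
    have : ContinuousAt (fun x : ℝ => wzCoeff x 0 * (128 * x ^ 5 / (3 * (2 * x - 1) ^ 3))) 0 :=
      (continuousAt_wzCoeff 0).mul
        (ContinuousAt.div (by fun_prop) (by fun_prop) (by norm_num))
    simpa [ContinuousAt] using this
  refine h.zero_mul_isBoundedUnder_le (isBoundedUnder_of_eventually_le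
    (a := ∑' n : ℕ, (pochR (1 / 2 + 1 / 8) n / pochR (3 / 2 - 1 / 8) n) ^ 3) ?_)
  filter_upwards [Ioo_mem_nhds (by norm_num : (-1 / 4 : ℝ) < 0) (by norm_num : (0 : ℝ) < 1 / 8)]
    with x hx
  have h0 : ∀ n, 0 ≤ pochR (1 / 2 + x) n / pochR (3 / 2 - x) n := fun n =>
    (div_pos (pochR_pos (by linarith [hx.1]) n) (pochR_pos (by linarith [hx.2]) n)).le
  simp only [Function.comp]
  rw [Real.norm_of_nonneg (tsum_nonneg fun n => pow_nonneg (h0 n) 3)]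
  exact (summable_pochR_div hx.1 (by linarith [hx.2])).tsum_le_tsum
    (fun n => pow_le_pow_left₀ (h0 n)
      (pochR_div_le_pochR_div hx.1 hx.2.le (by norm_num) n) 3)
    (summable_pochR_div (by norm_num) (by norm_num))

theorem identity_zero :
    1 / 48 * (∑' n : ℕ, wzCoeff 0 n * (74 * ((n : ℝ) + 0) ^ 2 + 27 * (n + 0) + 3)) =
      1 / Real.pi ^ 2 := by
  have hL := (tendsto_tsum_wzCoeff_mul.const_mul (1 / 48)).mono_left
    (nhdsWithin_le_nhds (s := {0}ᶜ))
  have hcos : Tendsto (fun x : ℝ => 1 / Real.pi ^ 2 *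
      ((8 * Real.cos (Real.pi * x) ^ 4 - 8 * Real.cos (Real.pi * x) ^ 2 + 3) /
        (4 * Real.cos (Real.pi * x) ^ 4 - Real.cos (Real.pi * x) ^ 2))) (𝓝 0)
      (𝓝 (1 / Real.pi ^ 2)) := by
    have : ContinuousAt (fun x : ℝ => 1 / Real.pi ^ 2 *
      ((8 * Real.cos (Real.pi * x) ^ 4 - 8 * Real.cos (Real.pi * x) ^ 2 + 3) /
        (4 * Real.cos (Real.pi * x) ^ 4 - Real.cos (Real.pi * x) ^ 2))) 0 :=
      continuousAt_const.mul (ContinuousAt.div (by fun_prop) (by fun_prop) (by norm_num))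
    convert this.tendsto using 2
    norm_num
  have hR := (hcos.add tendsto_remainder).mono_left (nhdsWithin_le_nhds (s := {0}ᶜ))
  rw [add_zero] at hR
  refine tendsto_nhds_unique (hL.congr' ?_) hR
  filter_upwards [self_mem_nhdsWithin, mem_nhdsWithin_of_mem_nhds
    (Ioo_mem_nhds (by norm_num : (-1 / 4 : ℝ) < 0) (by norm_num : (0 : ℝ) < 1 / 4))] with x hx hI
  exact identity_of_ne_zero hx hI.1 hI.2

/-- For `-1/4 < x < 1/4`,
`(1/48) ∑_{n≥0} (3/4)^{3(n+x)} (1/2)_{n+x}³(1/3)_{n+x}(2/3)_{n+x}/(1)_{n+x}⁵ (74(n+x)²+27(n+x)+3)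
 = (1/π²)(8cos⁴πx - 8cos²πx + 3)/(4cos⁴πx - cos²πx)
   + (3/4)^{3x} (1/2)_x³(1/3)_x(2/3)_x/(1)_x⁵ · 128x⁵/(3(2x-1)³) ·
     ∑_{n≥0} ((1/2+x)_n/(3/2-x)_n)³`. -/
theorem identity_pi2_2 (x : ℝ) (hx1 : -1/4 < x) (hx2 : x < 1/4) :
    Summable (fun n : ℕ =>
      (3/4 : ℝ) ^ ((3 : ℝ) * ((n : ℝ) + x)) *
        (pochG (1/2) ((n : ℝ) + x) ^ 3 * pochG (1/3) ((n : ℝ) + x) *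
          pochG (2/3) ((n : ℝ) + x) / pochG 1 ((n : ℝ) + x) ^ 5) *
        (74 * ((n : ℝ) + x) ^ 2 + 27 * ((n : ℝ) + x) + 3)) ∧
    Summable (fun n : ℕ =>
      (pochR (1/2 + x) n / pochR (3/2 - x) n) ^ 3) ∧
    (1/48 : ℝ) * (∑' n : ℕ,
        (3/4 : ℝ) ^ ((3 : ℝ) * ((n : ℝ) + x)) *
          (pochG (1/2) ((n : ℝ) + x) ^ 3 * pochG (1/3) ((n : ℝ) + x) *
            pochG (2/3) ((n : ℝ) + x) / pochG 1 ((n : ℝ) + x) ^ 5) *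
          (74 * ((n : ℝ) + x) ^ 2 + 27 * ((n : ℝ) + x) + 3))
      = (1 / Real.pi ^ 2) *
          ((8 * Real.cos (Real.pi * x) ^ 4 - 8 * Real.cos (Real.pi * x) ^ 2 + 3) /
            (4 * Real.cos (Real.pi * x) ^ 4 - Real.cos (Real.pi * x) ^ 2)) +
        (3/4 : ℝ) ^ ((3 : ℝ) * x) *
          (pochG (1/2) x ^ 3 * pochG (1/3) x * pochG (2/3) x / pochG 1 x ^ 5) *
          (128 * x ^ 5 / (3 * (2 * x - 1) ^ 3)) *
          ∑' n : ℕ, (pochR (1/2 + x) n / pochR (3/2 - x) n) ^ 3 := by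
  refine ⟨summable_wzCoeff_mul hx1 hx2, summable_pochR_div hx1 hx2, ?_⟩
  rcases eq_or_ne x 0 with rfl | hx
  · refine identity_zero.trans ?_
    norm_num
  · refine (identity_of_ne_zero hx hx1 hx2).trans ?_
    simp only [wzCoeff, Nat.cast_zero, zero_add]
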